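/- arXiv:1005.3876 — 11 statements merged into one kernel-verified Lean document; each statement's English description precedes it below -/
import Mathlib

section
/- Let G be a finite group and X a finite set of subgroups of G with G ∈ X, regarded as a poset under inclusion (with maximum element G) with Möbius function μ_X. Let C_X be the set of all cosets xH with x ∈ G and H ∈ X, H ≠ G, ordered by inclusion, and for each k ≥ 1 let c_k be the number of k-element subsets of C_X that are totally ordered by inclusion. Then Σ_{H ∈ X} μ_X(H,G)·|G:H| = 1 − Σ_{k ≥ 1} (−1)^{k−1}·c_k. -/
open scoped Classical Pointwise

/-- The totally ordered subsets of a finite subset of a poset, the empty one included. -/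
noncomputable def chainFinset {α : Type*} [PartialOrder α] (A : Finset α) : Finset (Finset α) :=
  A.powerset.filter fun S => ∀ a ∈ S, ∀ b ∈ S, a ≤ b ∨ b ≤ a

theorem mem_chainFinset {α : Type*} [PartialOrder α] {A S : Finset α} :
    S ∈ chainFinset A ↔ S ⊆ A ∧ ∀ a ∈ S, ∀ b ∈ S, a ≤ b ∨ b ≤ a := by
  simp [chainFinset]

/-- The negative of the reduced Euler characteristic of the order complex of `A`. -/
noncomputable def signedChainSum {α : Type*} [PartialOrder α] (A : Finset α) : ℤ :=
  ∑ S ∈ chainFinset A, (-1) ^ S.card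

/-- Sorting chains by their least element. -/
theorem signedChainSum_eq {α : Type*} [PartialOrder α] (A : Finset α) :
    signedChainSum A = 1 - ∑ a ∈ A, signedChainSum (A.filter (a < ·)) := by
  have hempty : ∅ ∈ chainFinset A := by simp [mem_chainFinset]
  have hsum : ∑ S ∈ (chainFinset A).erase ∅, (-1 : ℤ) ^ S.card
      = ∑ p ∈ A.sigma fun a => chainFinset (A.filter (a < ·)), -(-1 : ℤ) ^ p.2.card := by
    symm
    refine Finset.sum_bij (fun p _ => insert p.1 p.2) ?_ ?_ ?_ ?_
    · rintro ⟨a, S⟩ h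
      simp only [Finset.mem_sigma, mem_chainFinset, Finset.mem_erase] at h ⊢
      obtain ⟨ha, hS, hch⟩ := h
      have hlt : ∀ b ∈ S, b ∈ A ∧ a < b := fun b hb => by simpa using hS hb
      refine ⟨Finset.insert_ne_empty _ _, ?_, ?_⟩
      · exact Finset.insert_subset ha fun b hb => (hlt b hb).1
      · intro b hb d hd
        rcases Finset.mem_insert.1 hb with hba | hbS <;>
          rcases Finset.mem_insert.1 hd with hda | hdS
        · exact Or.inl (hba.trans hda.symm).le
        · exact Or.inl (hba ▸ (hlt d hdS).2.le)
        · exact Or.inr (hda ▸ (hlt b hbS).2.le)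
        · exact hch b hbS d hdS
    · rintro ⟨a, S⟩ h ⟨b, T⟩ h' heq
      simp only [Finset.mem_sigma, mem_chainFinset] at h h' heq
      have hS : ∀ d ∈ S, a < d := fun d hd => (Finset.mem_filter.1 (h.2.1 hd)).2
      have hT : ∀ d ∈ T, b < d := fun d hd => (Finset.mem_filter.1 (h'.2.1 hd)).2
      have hab : a = b := by
        have h1 : a ∈ insert b T := heq ▸ Finset.mem_insert_self a S
        have h2 : b ∈ insert a S := heq ▸ Finset.mem_insert_self b T
        rcases Finset.mem_insert.1 h1 with h1 | h1
        · exact h1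
        · rcases Finset.mem_insert.1 h2 with h2 | h2
          · exact h2.symm
          · exact absurd (hS b h2) (hT a h1).asymm
      subst hab
      have hST : S = T := by
        rw [← Finset.erase_insert fun ha => (hS a ha).false, heq,
          Finset.erase_insert fun ha => (hT a ha).false]
      rw [hST]
    · intro S h
      simp only [mem_chainFinset, Finset.mem_erase] at h
      obtain ⟨hne, hSA, hch⟩ := h
      obtain ⟨a, ha⟩ := S.exists_minimal (Finset.nonempty_iff_ne_empty.2 hne)
      have hle : ∀ b ∈ S, a ≤ b := fun b hb => (hch a ha.1 b hb).elim id fun hba => ha.2 hb hba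
      refine ⟨⟨a, S.erase a⟩, ?_, Finset.insert_erase ha.1⟩
      simp only [Finset.mem_sigma, mem_chainFinset]
      refine ⟨hSA ha.1, fun b hb => ?_, fun b hb d hd =>
        hch b (Finset.mem_of_mem_erase hb) d (Finset.mem_of_mem_erase hd)⟩
      obtain ⟨hba, hb⟩ := Finset.mem_erase.1 hb
      exact Finset.mem_filter.2 ⟨hSA hb, lt_of_le_of_ne (hle b hb) hba.symm⟩
    · rintro ⟨a, S⟩ h
      simp only [Finset.mem_sigma, mem_chainFinset] at h
      have ha : a ∉ S := fun ha => (Finset.mem_filter.1 (h.2.1 ha)).2.false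
      simp [Finset.card_insert_of_notMem ha, pow_succ]
  rw [signedChainSum, ← Finset.add_sum_erase _ _ hempty, hsum, Finset.sum_sigma]
  simp [signedChainSum, sub_eq_add_neg]

/-- A function satisfying the recursion of the Möbius function in its upper argument also
satisfies the dual recursion in its lower argument. -/
theorem mobius_lower_recursion {α : Type*} [PartialOrder α] (X : Finset α) (mu : α → α → ℤ)
    (hmu_refl : ∀ a ∈ X, mu a a = 1)
    (hmu_rec : ∀ a ∈ X, ∀ b ∈ X, a < b →
      mu a b = -∑ u ∈ X.filter (fun u => a ≤ u ∧ u < b), mu a u)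
    {a b : α} (ha : a ∈ X) (hb : b ∈ X) (hab : a < b) :
    mu a b = -∑ u ∈ X.filter (fun u => a < u ∧ u ≤ b), mu u b := by
  let M : Matrix X X ℤ := fun a b => if a ≤ b then mu a b else 0
  let Z : Matrix X X ℤ := fun a b => if a ≤ b then 1 else 0
  have hMZ : M * Z = 1 := by
    ext ⟨p, hp⟩ ⟨q, hq⟩
    have hentry : (M * Z) ⟨p, hp⟩ ⟨q, hq⟩
        = ∑ u ∈ X.filter (fun u => p ≤ u ∧ u ≤ q), mu p u := by
      rw [Matrix.mul_apply, Finset.sum_filter, ← Finset.sum_coe_sort X]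
      refine Finset.sum_congr rfl fun u _ => ?_
      by_cases h1 : p ≤ u <;> by_cases h2 : u ≤ q <;> simp [M, Z, ← Subtype.coe_le_coe, h1, h2]
    rw [hentry]
    by_cases hpq : p = q
    · subst hpq
      have hfil : X.filter (fun u => p ≤ u ∧ u ≤ p) = {p} := by
        ext u
        simp only [Finset.mem_filter, Finset.mem_singleton]
        exact ⟨fun h => le_antisymm h.2.2 h.2.1, fun h => ⟨h ▸ hp, h.ge, h.le⟩⟩
      simp [hfil, hmu_refl p hp]
    · rw [Matrix.one_apply_ne (by simpa using hpq)]
      by_cases hle : p ≤ q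
      · have hfil : X.filter (fun u => p ≤ u ∧ u ≤ q)
            = insert q (X.filter fun u => p ≤ u ∧ u < q) := by
          ext u
          simp only [Finset.mem_filter, Finset.mem_insert, le_iff_lt_or_eq (a := u)]
          constructor
          · tauto
          · rintro (rfl | h)
            · exact ⟨hq, hle, Or.inr rfl⟩
            · tauto
        rw [hfil, Finset.sum_insert (by simp), hmu_rec p hp q hq (lt_of_le_of_ne hle hpq)]
        simp
      · refine Finset.sum_eq_zero fun u hu => ?_
        obtain ⟨_, h1, h2⟩ := Finset.mem_filter.1 hu
        exact absurd (h1.trans h2) hle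
  have hZM : (Z * M) ⟨a, ha⟩ ⟨b, hb⟩ = 0 := by
    rw [mul_eq_one_comm.1 hMZ, Matrix.one_apply_ne (by simpa using hab.ne)]
  have hentry : (Z * M) ⟨a, ha⟩ ⟨b, hb⟩
      = ∑ u ∈ X.filter (fun u => a ≤ u ∧ u ≤ b), mu u b := by
    rw [Matrix.mul_apply, Finset.sum_filter, ← Finset.sum_coe_sort X]
    refine Finset.sum_congr rfl fun u _ => ?_
    by_cases h1 : a ≤ u <;> by_cases h2 : u ≤ b <;> simp [M, Z, ← Subtype.coe_le_coe, h1, h2]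
  have hfil : X.filter (fun u => a ≤ u ∧ u ≤ b)
      = insert a (X.filter fun u => a < u ∧ u ≤ b) := by
    ext u
    simp only [Finset.mem_filter, Finset.mem_insert, le_iff_lt_or_eq (a := a), eq_comm (a := a)]
    constructor
    · tauto
    · rintro (rfl | h)
      · exact ⟨ha, Or.inr rfl, hab.le⟩
      · tauto
  rw [hentry, hfil, Finset.sum_insert (by simp)] at hZM
  linarith

theorem leftCoset_subset_leftCoset_iff {G : Type*} [Group G] {x y : G} {H K : Subgroup G} :
    x • (H : Set G) ⊆ y • (K : Set G) ↔ H ≤ K ∧ y • (K : Set G) = x • (K : Set G) := by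
  constructor
  · intro h
    have hx : x ∈ y • (K : Set G) := h ⟨1, H.one_mem, mul_one x⟩
    have hyx : y • (K : Set G) = x • (K : Set G) := by
      rw [leftCoset_eq_iff]
      simpa [Set.mem_smul_set_iff_inv_smul_mem] using hx
    rw [hyx, Set.smul_set_subset_smul_set_iff] at h
    exact ⟨h, hyx⟩
  · rintro ⟨h, hyx⟩
    rw [hyx, Set.smul_set_subset_smul_set_iff]
    exact h

theorem subgroup_eq_of_leftCoset_eq {G : Type*} [Group G] {x y : G} {H K : Subgroup G}
    (h : x • (H : Set G) = y • (K : Set G)) : H = K :=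
  le_antisymm (leftCoset_subset_leftCoset_iff.1 h.subset).1
    (leftCoset_subset_leftCoset_iff.1 h.superset).1

theorem leftCoset_ssubset_leftCoset_iff {G : Type*} [Group G] {x : G} {H K : Subgroup G} :
    x • (H : Set G) < x • (K : Set G) ↔ H < K := by
  simp only [lt_iff_le_not_ge, Set.smul_set_subset_smul_set_iff, SetLike.coe_subset_coe]

/-- The chains of proper cosets strictly above `xH` compute the Möbius function at `H`. -/
theorem signedChainSum_cosets_above {G : Type*} [Group G] [Finite G]
    (X : Finset (Subgroup G)) (C : Finset (Set G))
    (hC : ∀ D, D ∈ C ↔ ∃ (x : G) (H : Subgroup G), H ∈ X ∧ H ≠ ⊤ ∧ D = x • (H : Set G))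
    (m : Subgroup G → ℤ)
    (hm : ∀ H ∈ X, H ≠ ⊤ → m H = -(1 + ∑ K ∈ X.filter (fun K => H < K ∧ K ≠ ⊤), m K))
    (x : G) (H : Subgroup G) (hH : H ∈ X) (hHtop : H ≠ ⊤) :
    signedChainSum (C.filter (x • (H : Set G) < ·)) = -m H := by
  induction H using WellFoundedGT.induction with
  | ind H ih =>
    rw [signedChainSum_eq, hm H hH hHtop, neg_neg, sub_eq_add_neg, ← Finset.sum_neg_distrib]
    congr 1
    symm
    refine Finset.sum_bij (fun K _ => x • (K : Set G)) ?_ ?_ ?_ ?_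
    · intro K hK
      obtain ⟨hKX, hHK, hKtop⟩ := Finset.mem_filter.1 hK
      exact Finset.mem_filter.2
        ⟨(hC _).2 ⟨x, K, hKX, hKtop, rfl⟩, leftCoset_ssubset_leftCoset_iff.2 hHK⟩
    · intro K _ L _ h
      exact subgroup_eq_of_leftCoset_eq h
    · intro D hD
      obtain ⟨hDC, hlt⟩ := Finset.mem_filter.1 hD
      obtain ⟨y, K, hKX, hKtop, rfl⟩ := (hC D).1 hDC
      have hyx := (leftCoset_subset_leftCoset_iff.1 hlt.le).2
      rw [hyx] at hlt
      exact ⟨K, Finset.mem_filter.2 ⟨hKX, leftCoset_ssubset_leftCoset_iff.1 hlt, hKtop⟩, hyx.symm⟩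
    · intro K hK
      obtain ⟨hKX, hHK, hKtop⟩ := Finset.mem_filter.1 hK
      have hfil : (C.filter (x • (H : Set G) < ·)).filter (x • (K : Set G) < ·)
          = C.filter (x • (K : Set G) < ·) := by
        ext D
        simp only [Finset.mem_filter]
        exact ⟨fun h => ⟨h.1.1, h.2⟩,
          fun h => ⟨⟨h.1, (leftCoset_ssubset_leftCoset_iff.2 hHK).trans h.2⟩, h.2⟩⟩
      rw [hfil, ih K hHK hKX hKtop, neg_neg]

/-- Each subgroup `H` contributes `|G:H|` cosets. -/
theorem sum_cosets {G : Type*} [Group G] [Finite G]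
    (X : Finset (Subgroup G)) (C : Finset (Set G))
    (hC : ∀ D, D ∈ C ↔ ∃ (x : G) (H : Subgroup G), H ∈ X ∧ H ≠ ⊤ ∧ D = x • (H : Set G))
    (m : Subgroup G → ℤ) (f : Set G → ℤ)
    (hf : ∀ (x : G), ∀ H ∈ X, H ≠ ⊤ → f (x • (H : Set G)) = m H) :
    ∑ D ∈ C, f D = ∑ H ∈ X.erase ⊤, m H * (H.index : ℤ) := by
  have := Fintype.ofFinite G
  have hsigma : ∑ D ∈ C, f D
      = ∑ p ∈ (X.erase ⊤).sigma fun H => (Finset.univ : Finset (G ⧸ H)), m p.1 := by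
    symm
    refine Finset.sum_bij (fun p _ => p.2.out • (p.1 : Set G)) ?_ ?_ ?_ ?_
    · rintro ⟨H, q⟩ h
      simp only [Finset.mem_sigma, Finset.mem_erase] at h
      exact (hC _).2 ⟨q.out, H, h.1.2, h.1.1, rfl⟩
    · rintro ⟨H, q⟩ _ ⟨K, r⟩ _ h
      obtain rfl : H = K := subgroup_eq_of_leftCoset_eq h
      have hqr : q = r := by
        rw [← q.out_eq', ← r.out_eq']
        exact QuotientGroup.eq.2 ((leftCoset_eq_iff H).1 h)
      rw [hqr]
    · intro D hD
      obtain ⟨x, H, hHX, hHtop, rfl⟩ := (hC D).1 hD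
      refine ⟨⟨H, (x : G ⧸ H)⟩, by simp [hHX, hHtop], ?_⟩
      exact (leftCoset_eq_iff H).2 (QuotientGroup.eq.1 (Quotient.out_eq' _))
    · rintro ⟨H, q⟩ h
      simp only [Finset.mem_sigma, Finset.mem_erase] at h
      exact (hf _ H h.1.2 h.1.1).symm
  rw [hsigma, Finset.sum_sigma]
  refine Finset.sum_congr rfl fun H _ => ?_
  simp [Subgroup.index, Nat.card_eq_fintype_card, mul_comm]

/-- Grouping chains by their cardinality. -/
theorem signedChainSum_eq_one_sub_tsum {α : Type*} [PartialOrder α] (A : Finset α) :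
    signedChainSum A
      = 1 - ∑' k : ℕ, (-1 : ℤ) ^ k * ((chainFinset A).filter (·.card = k + 1)).card := by
  have hcard : ∀ S ∈ chainFinset A, S.card ≤ A.card :=
    fun S hS => Finset.card_le_card (mem_chainFinset.1 hS).1
  have hfin : ∀ k ∉ Finset.range A.card,
      (-1 : ℤ) ^ k * ((chainFinset A).filter (·.card = k + 1)).card = 0 := by
    intro k hk
    have : (chainFinset A).filter (·.card = k + 1) = ∅ := by
      refine Finset.filter_eq_empty_iff.2 fun S hS => ?_
      have := hcard S hS
      have := Finset.mem_range.not.1 hk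
      lia
    simp [this]
  have hzero : (chainFinset A).filter (·.card = 0) = {∅} := by
    ext S
    simp only [Finset.mem_filter, Finset.card_eq_zero, Finset.mem_singleton, mem_chainFinset]
    exact ⟨fun h => h.2, fun h => by simp [h]⟩
  rw [tsum_eq_sum hfin, signedChainSum, ← Finset.sum_fiberwise_of_maps_to
    (t := Finset.range (A.card + 1)) (g := Finset.card)
    (fun S hS => Finset.mem_range.2 (Nat.lt_succ_of_le (hcard S hS)))]
  have hfiber : ∀ k, ∑ S ∈ (chainFinset A).filter (·.card = k), (-1 : ℤ) ^ S.card
      = (-1) ^ k * ((chainFinset A).filter (·.card = k)).card := by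
    intro k
    rw [Finset.sum_congr rfl fun S hS => by rw [(Finset.mem_filter.1 hS).2]]
    simp [mul_comm]
  simp only [hfiber]
  rw [Finset.sum_range_succ', hzero]
  simp only [pow_succ, pow_zero, Finset.card_singleton, mul_neg_one, neg_mul,
    Finset.sum_neg_distrib]
  push_cast
  ring

/-- Let `G` be a finite group and `X` a finite set of subgroups of `G`
containing `G`, regarded as a poset under inclusion with Möbius function `mu`.  Let `CX`
be the collection of all cosets `xH` with `H ∈ X`, `H ≠ G`, and for `k ≥ 1` let `c k` be
the number of `k`-element subsets of `CX` totally ordered by inclusion (the `(k-1)`-chains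
of the coset poset).  Then `∑_{H ∈ X} μ_X(H,G)·|G:H| = 1 - ∑_{k ≥ 1} (-1)^{k-1}·c_k`. -/
theorem stmt_1 {G : Type*} [Group G] [Fintype G]
    (X : Finset (Subgroup G)) (hX : ⊤ ∈ X)
    (mu : Subgroup G → Subgroup G → ℤ)
    (hmu_refl : ∀ H ∈ X, mu H H = 1)
    (hmu_rec : ∀ A ∈ X, ∀ B ∈ X, A < B →
      mu A B = -∑ U ∈ X.filter (fun U : Subgroup G => A ≤ U ∧ U < B), mu A U)
    (CX : Set (Set G))
    (hCX : CX = {C : Set G | ∃ (x : G) (H : Subgroup G), H ∈ X ∧ H ≠ ⊤ ∧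
      C = x • (H : Set G)})
    (c : ℕ → ℕ)
    (hc : ∀ k : ℕ, c k = Nat.card {S : Finset (Set G) //
        S.card = k ∧ ↑S ⊆ CX ∧ ∀ a ∈ S, ∀ b ∈ S, a ⊆ b ∨ b ⊆ a}) :
    ∑ H ∈ X, mu H ⊤ * (H.index : ℤ)
      = 1 - ∑' k : ℕ, (-1 : ℤ) ^ k * c (k + 1) := by
  have hC : ∀ D, D ∈ CX.toFinset ↔
      ∃ (x : G) (H : Subgroup G), H ∈ X ∧ H ≠ ⊤ ∧ D = x • (H : Set G) := by
    intro D
    rw [Set.mem_toFinset, hCX]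
    rfl
  have hck : ∀ k, c k = ((chainFinset CX.toFinset).filter (·.card = k)).card := by
    intro k
    rw [hc, Nat.subtype_card]
    intro S
    rw [Finset.mem_filter, mem_chainFinset, and_comm, Set.subset_toFinset]
  have hm : ∀ H ∈ X, H ≠ ⊤ →
      mu H ⊤ = -(1 + ∑ K ∈ X.filter (fun K => H < K ∧ K ≠ ⊤), mu K ⊤) := by
    intro H hH hHtop
    have hfil : X.filter (fun K => H < K ∧ K ≤ ⊤)
        = insert ⊤ (X.filter fun K => H < K ∧ K ≠ ⊤) := by
      ext K
      by_cases hK : K = ⊤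
      · simp [hK, hX, hHtop.lt_top]
      · simp [hK]
    rw [mobius_lower_recursion X mu hmu_refl hmu_rec hH hX hHtop.lt_top, hfil,
      Finset.sum_insert (by simp), hmu_refl ⊤ hX]
  simp only [hck]
  rw [← signedChainSum_eq_one_sub_tsum, signedChainSum_eq, sub_eq_add_neg,
    ← Finset.sum_neg_distrib,
    sum_cosets X _ hC (fun H => mu H ⊤) _ fun x H hH hHtop => by
      rw [signedChainSum_cosets_above X _ hC (fun H => mu H ⊤) hm x H hH hHtop, neg_neg],
    ← Finset.add_sum_erase X _ hX, hmu_refl ⊤ hX]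
  simp
end

section
/- Let p be a prime number greater than 3, set q = (p−1)/2 and r = (p+1)/2, and let G = PSL(2, F_p) be the projective special linear group of 2×2 matrices over the field with p elements (so |G| = 2pqr). Then for every integer s ≥ 1, the number of commuting s-tuples in G satisfies |Hom(ℤ^s, G)| = (p+1)·p^s + pr·q^s + pq·r^s + (pqr/6)·4^s − (pqr/2)·2^s − (p + pr + pq − pqr/3). -/
open Finset

section Counting

variable {F : Type*} [Field F] [Fintype F]

lemma exists_sq_sub_mul_sq_eq (hF : ringChar F ≠ 2) {d : F} (hd : d ≠ 0) (m : F) :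
    ∃ a b : F, a ^ 2 - d * b ^ 2 = m := by
  have hodd : Fintype.card F % 2 = 1 := FiniteField.odd_card_of_char_ne_two hF
  obtain ⟨a, b, h⟩ := FiniteField.exists_root_sum_quadratic
    (f := (Polynomial.X ^ 2 - Polynomial.C m : Polynomial F))
    (g := (Polynomial.C (-d) * Polynomial.X ^ 2 : Polynomial F))
    (Polynomial.degree_X_pow_sub_C (by norm_num) m)
    (Polynomial.degree_C_mul_X_pow 2 (neg_ne_zero.2 hd)) hodd
  simp at h
  exact ⟨a, b, by linear_combination h⟩

variable [DecidableEq F]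

lemma card_filter_sq_eq (hF : ringChar F ≠ 2) (d : F) :
    (#{a : F | a ^ 2 = d} : ℤ) = 1 + quadraticChar F d := by
  have h := quadraticChar_card_sqrts hF d
  rw [add_comm, ← h]
  congr 2
  ext a
  simp

lemma card_filter_mul_eq_zero :
    (#{x : F × F | x.1 * x.2 = 0} : ℤ) = 2 * Fintype.card F - 1 := by
  rw [Finset.card_filter, Fintype.sum_prod_type]
  have h (b : F) : (∑ c : F, if b * c = 0 then 1 else 0) =
      if b = 0 then Fintype.card F else 1 := by
    by_cases hb : b = 0
    · simp [hb]
    · simp [hb]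
  simp only [h]
  rw [Finset.sum_ite]
  have h1 : #{b : F | b = 0} = 1 := by simp [Finset.filter_eq']
  have h2 := Finset.card_filter_add_card_filter_not (s := (univ : Finset F)) (fun b : F => b = 0)
  rw [h1, Finset.card_univ] at h2
  simp only [sum_const, h1, smul_eq_mul]
  push_cast
  lia

lemma card_filter_mul_eq {m : F} (hm : m ≠ 0) :
    (#{x : F × F | x.1 * x.2 = m} : ℤ) = Fintype.card F - 1 := by
  rw [Finset.card_filter, Fintype.sum_prod_type]
  have h (b : F) : (∑ c : F, if b * c = m then 1 else 0) = if b = 0 then 0 else 1 := by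
    by_cases hb : b = 0
    · simp [hb, hm.symm]
    · have : ∀ c, b * c = m ↔ c = m / b := fun c => by rw [eq_div_iff hb, mul_comm]
      simp [hb, this]
  simp only [h]
  have h1 : #{b : F | b = 0} = 1 := by simp [Finset.filter_eq']
  have h2 := Finset.card_filter_add_card_filter_not (s := (univ : Finset F)) (fun b : F => b = 0)
  rw [h1, Finset.card_univ] at h2
  rw [Finset.sum_ite]
  simp only [sum_const, smul_eq_mul]
  push_cast
  lia

/-- The number of trace-zero matrices with a prescribed determinant. -/
lemma card_filter_sq_add_mul_eq (hF : ringChar F ≠ 2) (d : F) :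
    (#{x : F × F × F | x.1 ^ 2 + x.2.1 * x.2.2 = d} : ℤ) =
      Fintype.card F ^ 2 + Fintype.card F * quadraticChar F d := by
  rw [Finset.card_filter, Fintype.sum_prod_type]
  have h (a : F) : ((∑ y : F × F, if a ^ 2 + y.1 * y.2 = d then 1 else 0 : ℕ) : ℤ) =
      Fintype.card F - 1 + if a ^ 2 = d then (Fintype.card F : ℤ) else 0 := by
    rw [← Finset.card_filter]
    have e : ∀ y : F × F, a ^ 2 + y.1 * y.2 = d ↔ y.1 * y.2 = d - a ^ 2 := fun y => by
      rw [eq_sub_iff_add_eq, add_comm]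
    simp only [e]
    split_ifs with ha
    · rw [ha, sub_self, card_filter_mul_eq_zero]; ring
    · rw [card_filter_mul_eq (sub_ne_zero.2 (Ne.symm ha))]; ring
  push_cast at h ⊢
  simp only [h]
  rw [Finset.sum_add_distrib, ← Finset.sum_filter, Finset.sum_const, Finset.sum_const,
    nsmul_eq_mul, nsmul_eq_mul, card_filter_sq_eq hF, Finset.card_univ]
  ring

/-- A nondegenerate affine conic `a² - d b² = m` has `|F| - χ(d)` points. -/
lemma card_filter_conic (hF : ringChar F ≠ 2) {d : F} (hd : d ≠ 0) {m : F} (hm : m ≠ 0) :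
    (#{x : F × F | x.1 ^ 2 - d * x.2 ^ 2 = m} : ℤ) = Fintype.card F - quadraticChar F d := by
  set N : F → ℤ := fun m => #{x : F × F | x.1 ^ 2 - d * x.2 ^ 2 = m} with hN
  have hconst : ∀ n : F, n ≠ 0 → N n = N m := by
    intro n hn
    obtain ⟨a, b, hab⟩ := exists_sq_sub_mul_sq_eq hF hd (m / n)
    have hab0 : a ^ 2 - d * b ^ 2 ≠ 0 := by rw [hab]; exact div_ne_zero hm hn
    simp only [hN]
    congr 1
    refine Finset.card_nbij' (fun x => (a * x.1 + d * b * x.2, a * x.2 + b * x.1))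
      (fun x => ((a * x.1 - d * b * x.2) / (a ^ 2 - d * b ^ 2),
        (a * x.2 - b * x.1) / (a ^ 2 - d * b ^ 2))) ?_ ?_ ?_ ?_
    · rintro ⟨x, y⟩ hx
      simp only [coe_filter, mem_univ, true_and, Set.mem_ofPred_eq] at hx ⊢
      rw [← hx] at hab hn
      rw [eq_div_iff hn] at hab
      linear_combination hab
    · rintro ⟨x, y⟩ hx
      simp only [coe_filter, mem_univ, true_and, Set.mem_ofPred_eq] at hx ⊢
      have h2 : n * (a ^ 2 - d * b ^ 2) = m := by rw [hab]; field_simp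
      field_simp
      rw [← mul_right_inj' hab0]
      linear_combination (a ^ 2 - d * b ^ 2) ^ 2 * hx - (a ^ 2 - d * b ^ 2) ^ 2 * h2
    · rintro ⟨x, y⟩ -
      simp only [Prod.mk.injEq]
      constructor <;> grind
    · rintro ⟨x, y⟩ -
      simp only [Prod.mk.injEq]
      constructor <;> grind
  have hzero : N 0 = 1 + (Fintype.card F - 1) * (1 + quadraticChar F d) := by
    simp only [hN]
    rw [Finset.card_filter, Fintype.sum_prod_type_right]
    have h (b : F) : ((∑ a : F, if a ^ 2 - d * b ^ 2 = 0 then 1 else 0 : ℕ) : ℤ) =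
        if b = 0 then 1 else 1 + quadraticChar F d := by
      rw [← Finset.card_filter]
      simp only [sub_eq_zero]
      rw [card_filter_sq_eq hF, map_mul]
      split_ifs with hb
      · simp [hb]
      · rw [quadraticChar_sq_one' hb, mul_one]
    push_cast at h ⊢
    simp only [h]
    have h1 : #{b : F | b = 0} = 1 := by simp [Finset.filter_eq']
    have h2 := Finset.card_filter_add_card_filter_not (s := (univ : Finset F))
      (fun b : F => b = 0)
    rw [h1, Finset.card_univ] at h2
    rw [Finset.sum_ite, Finset.sum_const, Finset.sum_const, h1, ← h2]
    simp
  have hsum : ∑ n, N n = (Fintype.card F : ℤ) ^ 2 := by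
    have := Finset.card_eq_sum_card_fiberwise (s := (univ : Finset (F × F)))
      (t := univ) (f := fun x => x.1 ^ 2 - d * x.2 ^ 2) (fun _ _ => by simp)
    simp only [hN]
    rw [← Nat.cast_sum, ← this, Finset.card_univ, Fintype.card_prod]
    push_cast
    ring
  rw [← Finset.add_sum_erase _ _ (mem_univ (0 : F)), hzero,
    Finset.sum_congr rfl (fun n hn => hconst n (Finset.ne_of_mem_erase hn)), Finset.sum_const,
    Finset.card_erase_of_mem (mem_univ _), Finset.card_univ, nsmul_eq_mul,
    Nat.cast_sub Fintype.card_pos] at hsum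
  have h1 : (1 : ℤ) < Fintype.card F := by exact_mod_cast Fintype.one_lt_card
  have h2 : ((Fintype.card F : ℤ) - 1) ≠ 0 := by lia
  apply mul_left_cancel₀ h2
  push_cast at hsum
  simp only [hN] at hsum
  linear_combination hsum

end Counting

section CommutingTuples

variable {F : Type*} [Field F]

local notation "SL₂" => Matrix.SpecialLinearGroup (Fin 2)

/-- Twice the trace-zero part of `g`, recorded by its entries `(0,0)`, `(0,1)`, `(1,0)`. -/
def axis (g : SL₂ F) : F × F × F :=
  (g 0 0 - g 1 1, 2 * g 0 1, 2 * g 1 0)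

/-- Linear dependence of two vectors of `F³`. -/
def Parallel (x y : F × F × F) : Prop :=
  x.1 * y.2.1 = x.2.1 * y.1 ∧ x.1 * y.2.2 = x.2.2 * y.1 ∧ x.2.1 * y.2.2 = x.2.2 * y.2.1

instance [DecidableEq F] (x y : F × F × F) : Decidable (Parallel x y) :=
  inferInstanceAs (Decidable (_ ∧ _ ∧ _))

lemma Parallel.symm {x y : F × F × F} (h : Parallel x y) : Parallel y x := by
  obtain ⟨h1, h2, h3⟩ := h
  exact ⟨by linear_combination -h1, by linear_combination -h2, by linear_combination -h3⟩

lemma Parallel.exists_smul {x y : F × F × F} (h : Parallel x y) (hx : x ≠ 0) :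
    ∃ c : F, y = c • x := by
  obtain ⟨x1, x2, x3⟩ := x
  obtain ⟨y1, y2, y3⟩ := y
  obtain ⟨h1, h2, h3⟩ := h
  simp only [ne_eq, Prod.mk_eq_zero, not_and_or] at hx h1 h2 h3
  simp only [Prod.smul_mk, smul_eq_mul, Prod.mk.injEq]
  rcases hx with hx | hx | hx
  · refine ⟨y1 / x1, ?_, ?_, ?_⟩ <;> field_simp <;> grind
  · refine ⟨y2 / x2, ?_, ?_, ?_⟩ <;> field_simp <;> grind
  · refine ⟨y3 / x3, ?_, ?_, ?_⟩ <;> field_simp <;> grind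

lemma parallel_smul_right {x y : F × F × F} (h : Parallel x y) (c : F) : Parallel x (c • y) := by
  obtain ⟨h1, h2, h3⟩ := h
  simp only [Parallel, Prod.smul_fst, Prod.smul_snd, smul_eq_mul]
  exact ⟨by linear_combination c * h1, by linear_combination c * h2, by linear_combination c * h3⟩

lemma parallel_self (x : F × F × F) : Parallel x x := ⟨mul_comm _ _, mul_comm _ _, mul_comm _ _⟩

lemma Parallel.trans {x y z : F × F × F} (h : Parallel x y) (h' : Parallel y z) (hy : y ≠ 0) :
    Parallel x z := by
  obtain ⟨c, rfl⟩ := h'.exists_smul hy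
  exact parallel_smul_right h c

lemma SL2_ext_iff {g h : SL₂ F} :
    g = h ↔ g 0 0 = h 0 0 ∧ g 0 1 = h 0 1 ∧ g 1 0 = h 1 0 ∧ g 1 1 = h 1 1 := by
  constructor
  · rintro rfl; simp
  · rintro ⟨h1, h2, h3, h4⟩
    ext i j
    fin_cases i <;> fin_cases j <;> assumption

lemma SL2_det (g : SL₂ F) : g 0 0 * g 1 1 - g 0 1 * g 1 0 = 1 := by
  rw [← Matrix.det_fin_two, g.2]

/-- The element of `SL₂` with the given entries. -/
def mkSL2 (a b c d : F) (h : a * d - b * c = 1) : SL₂ F :=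
  ⟨!![a, b; c, d], by rw [Matrix.det_fin_two_of, h]⟩

section mkSL2
variable (a b c d : F) (h : a * d - b * c = 1)

@[simp] lemma mkSL2_zero_zero : mkSL2 a b c d h 0 0 = a := rfl
@[simp] lemma mkSL2_zero_one : mkSL2 a b c d h 0 1 = b := rfl
@[simp] lemma mkSL2_one_zero : mkSL2 a b c d h 1 0 = c := rfl
@[simp] lemma mkSL2_one_one : mkSL2 a b c d h 1 1 = d := rfl

end mkSL2

lemma SL2_mul_apply (g h : SL₂ F) (i j : Fin 2) :
    (g * h) i j = g i 0 * h 0 j + g i 1 * h 1 j := by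
  simp [Matrix.mul_apply, Fin.sum_univ_two]

lemma mul_eq_mul_swap_iff_parallel (h2 : (2 : F) ≠ 0) (g h : SL₂ F) :
    g * h = h * g ↔ Parallel (axis g) (axis h) := by
  simp only [SL2_ext_iff, SL2_mul_apply, Parallel, axis]
  constructor
  · rintro ⟨h1, h2, h3, h4⟩
    refine ⟨?_, ?_, ?_⟩
    · linear_combination 2 * h2
    · linear_combination -2 * h3
    · linear_combination 4 * h1
  · rintro ⟨h1, h3, h4⟩
    refine ⟨?_, ?_, ?_, ?_⟩
    · apply mul_left_cancel₀ (mul_ne_zero h2 h2); linear_combination h4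
    · apply mul_left_cancel₀ h2; linear_combination h1
    · apply mul_left_cancel₀ h2; linear_combination -h3
    · apply mul_left_cancel₀ (mul_ne_zero h2 h2); linear_combination -h4

lemma axis_eq_zero_iff (h2 : (2 : F) ≠ 0) (g : SL₂ F) : axis g = 0 ↔ g = 1 ∨ g = -1 := by
  simp only [axis, Prod.mk_eq_zero, mul_eq_zero, h2, false_or, SL2_ext_iff]
  have hd := SL2_det g
  constructor
  · rintro ⟨ha, hb, hc⟩
    have : (g 0 0 - 1) * (g 0 0 + 1) = 0 := by
      linear_combination hd + g 0 0 * ha + g 1 0 * hb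
    rcases mul_eq_zero.1 this with h | h
    · left
      simp [hb, hc, sub_eq_zero.1 h, ← sub_eq_zero.1 ha]
    · right
      simp [hb, hc, eq_neg_of_add_eq_zero_left h, ← sub_eq_zero.1 ha]
  · rintro (⟨h1, h2, h3, h4⟩ | ⟨h1, h2, h3, h4⟩) <;> simp_all

lemma SL2_one_ne_neg_one (h2 : (2 : F) ≠ 0) : (1 : SL₂ F) ≠ -1 := by
  intro h
  have := (SL2_ext_iff.1 h).1
  simp at this
  exact h2 (by linear_combination this)

lemma trace_eq_zero_of_anticommute (h2 : (2 : F) ≠ 0) {x y : SL₂ F} (h : x * y = -(y * x)) :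
    x 0 0 + x 1 1 = 0 := by
  simp only [SL2_ext_iff, Matrix.SpecialLinearGroup.coe_neg, Matrix.neg_apply,
    SL2_mul_apply] at h
  obtain ⟨h1, h3, h4, h5⟩ := h
  have hy := SL2_det y
  apply mul_left_cancel₀ h2
  linear_combination (-2 * (x 0 0 + x 1 1)) * hy + y 1 1 * h1 + y 0 0 * h5 - y 1 0 * h3 - y 0 1 * h4

/-- `x` and `y` commute up to sign. -/
def SignCommute (x y : SL₂ F) : Prop := x * y = y * x ∨ x * y = -(y * x)

instance [DecidableEq F] (x y : SL₂ F) : Decidable (SignCommute x y) :=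
  inferInstanceAs (Decidable (_ ∨ _))

lemma SignCommute.symm {x y : SL₂ F} (h : SignCommute x y) : SignCommute y x := by
  rcases h with h | h
  · exact Or.inl h.symm
  · exact Or.inr (by rw [h, neg_neg])

lemma SL2_ne_neg (h2 : (2 : F) ≠ 0) (x : SL₂ F) : x ≠ -x := by
  intro h
  apply SL2_one_ne_neg_one h2
  apply mul_left_cancel (a := x)
  rw [mul_neg, mul_one]
  exact h

/-- The element `± aᵘ bᵛ` of the quaternion group generated by an anticommuting pair. -/
def quat (a b : SL₂ F) (w : Bool × Bool × Bool) : SL₂ F :=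
  (if w.1 then -1 else 1) * ((if w.2.1 then a else 1) * (if w.2.2 then b else 1))

/-- The commutator pairing on the exponents of `quat`. -/
def pairing (w z : Bool × Bool × Bool) : Bool := xor (w.2.1 && z.2.2) (z.2.1 && w.2.2)

lemma quat_mul_quat {a b : SL₂ F} (hab : a * b = -(b * a)) (w z : Bool × Bool × Bool) :
    quat a b w * quat a b z =
      if pairing w z then -(quat a b z * quat a b w) else quat a b z * quat a b w := by
  have hba : b * a = -(a * b) := by rw [hab, neg_neg]
  have hba' (c : SL₂ F) : b * (a * c) = -(a * (b * c)) := by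
    rw [← mul_assoc, hba, neg_mul, mul_assoc]
  obtain ⟨w1, w2, w3⟩ := w
  obtain ⟨z1, z2, z3⟩ := z
  cases w1 <;> cases w2 <;> cases w3 <;> cases z1 <;> cases z2 <;> cases z3 <;>
    simp [quat, pairing, mul_assoc, hba, hba']

lemma signCommute_quat {a b : SL₂ F} (hab : a * b = -(b * a)) (w z : Bool × Bool × Bool) :
    SignCommute (quat a b w) (quat a b z) := by
  rw [SignCommute, quat_mul_quat hab w z]
  split_ifs <;> simp

lemma quat_commute_iff (h2 : (2 : F) ≠ 0) {a b : SL₂ F} (hab : a * b = -(b * a))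
    (w z : Bool × Bool × Bool) :
    quat a b w * quat a b z = quat a b z * quat a b w ↔ pairing w z = false := by
  rw [quat_mul_quat hab w z]
  split_ifs with h
  · simp [h, (SL2_ne_neg h2 _).symm]
  · simpa using h

lemma quat_anticommute_iff (h2 : (2 : F) ≠ 0) {a b : SL₂ F} (hab : a * b = -(b * a))
    (w z : Bool × Bool × Bool) :
    quat a b w * quat a b z = -(quat a b z * quat a b w) ↔ pairing w z = true := by
  rw [quat_mul_quat hab w z]
  split_ifs with h
  · simp [h]
  · simp [h, (SL2_ne_neg h2 _)]

lemma quat_injective (h2 : (2 : F) ≠ 0) {a b : SL₂ F} (hab : a * b = -(b * a)) :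
    Function.Injective (quat a b) := by
  intro w z h
  have key (y : Bool × Bool × Bool) : pairing w y = pairing z y := by
    have h1 := quat_commute_iff h2 hab w y
    rw [h, quat_commute_iff h2 hab z y] at h1
    cases hw : pairing w y <;> cases hz : pairing z y <;> simp_all
  have hu := key (false, false, true)
  have hv := key (false, true, false)
  obtain ⟨w1, w2, w3⟩ := w
  obtain ⟨z1, z2, z3⟩ := z
  simp [pairing] at hu hv
  subst hu hv
  have h1 := mul_right_cancel h
  have := SL2_one_ne_neg_one h2
  cases w1 <;> cases z1 <;> simp_all [this.symm]

lemma exists_quat_eq (h2 : (2 : F) ≠ 0) {a b : SL₂ F} (hab : a * b = -(b * a)) {g : SL₂ F}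
    (ha : SignCommute g a) (hb : SignCommute g b) : ∃ w, quat a b w = g := by
  classical
  have hqa : quat a b (false, true, false) = a := by simp [quat]
  have hqb : quat a b (false, false, true) = b := by simp [quat]
  have hcancel {k c : SL₂ F} (hk : k * c = c * k) (hg : g * c = c * g) :
      (k⁻¹ * g) * c = c * (k⁻¹ * g) := by
    rw [mul_assoc, hg, ← mul_assoc, ← mul_assoc, (Commute.inv_left (show Commute k c from hk)).eq]
  have hcancel' {k c : SL₂ F} (hk : k * c = -(c * k)) (hg : g * c = -(c * g)) :
      (k⁻¹ * g) * c = c * (k⁻¹ * g) := by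
    have : c * k⁻¹ = -(k⁻¹ * c) := by
      apply mul_left_cancel (a := k)
      apply mul_right_cancel (b := k)
      simp only [mul_neg, neg_mul, mul_assoc, inv_mul_cancel, mul_one, mul_inv_cancel_left]
      exact hk
    rw [mul_assoc, hg, ← mul_assoc, this, mul_neg, neg_mul, mul_assoc]
  obtain ⟨u, v, hu, hv⟩ : ∃ u v : Bool,
      ((quat a b (false, u, v))⁻¹ * g) * a = a * ((quat a b (false, u, v))⁻¹ * g) ∧
      ((quat a b (false, u, v))⁻¹ * g) * b = b * ((quat a b (false, u, v))⁻¹ * g) := by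
    have hA (u v : Bool) := quat_mul_quat hab (false, u, v) (false, true, false)
    have hB (u v : Bool) := quat_mul_quat hab (false, u, v) (false, false, true)
    simp only [hqa] at hA
    simp only [hqb] at hB
    refine ⟨decide (g * b ≠ b * g), decide (g * a ≠ a * g), ?_, ?_⟩
    · by_cases h : g * a = a * g
      · refine hcancel ?_ h
        rw [hA]; simp [pairing, h]
      · refine hcancel' ?_ (ha.resolve_left h)
        rw [hA]; simp [pairing, h]
    · by_cases h : g * b = b * g
      · refine hcancel ?_ h
        rw [hB]; simp [pairing, h]
      · refine hcancel' ?_ (hb.resolve_left h)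
        rw [hB]; simp [pairing, h]
  have hax : axis ((quat a b (false, u, v))⁻¹ * g) = 0 := by
    by_contra hne
    have hpar := ((mul_eq_mul_swap_iff_parallel h2 _ _).1 hu).symm.trans
      ((mul_eq_mul_swap_iff_parallel h2 _ _).1 hv) hne
    rw [← mul_eq_mul_swap_iff_parallel h2, hab] at hpar
    exact SL2_ne_neg h2 _ hpar.symm
  rcases (axis_eq_zero_iff h2 _).1 hax with h | h
  · exact ⟨_, inv_mul_eq_one.1 h⟩
  · refine ⟨(true, u, v), ?_⟩
    rw [inv_mul_eq_iff_eq_mul] at h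
    rw [h, mul_neg_one]
    simp only [quat, if_true, Bool.false_eq_true, if_false, one_mul, neg_one_mul]

lemma mem_center_SL2_iff {g : SL₂ F} : g ∈ Subgroup.center (SL₂ F) ↔ g = 1 ∨ g = -1 := by
  constructor
  · intro h
    obtain ⟨r, hr, hg⟩ := Matrix.SpecialLinearGroup.mem_center_iff.1 h
    rw [Fintype.card_fin, sq_eq_one_iff] at hr
    rcases hr with rfl | rfl
    · left
      ext i j
      rw [← hg]
      simp
    · right
      ext i j
      rw [← hg]
      simp [Matrix.one_apply, Matrix.diagonal_apply, apply_ite]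
  · rintro (rfl | rfl)
    · exact one_mem _
    · rw [Subgroup.mem_center_iff]
      intro h
      simp

lemma card_center_SL2 (h2 : (2 : F) ≠ 0) : Nat.card (Subgroup.center (SL₂ F)) = 2 := by
  have : (Subgroup.center (SL₂ F) : Set (SL₂ F)) = {1, -1} := by
    ext g
    simp [mem_center_SL2_iff]
  rw [← SetLike.coe_sort_coe, this, Nat.card_coe_set_eq, Set.ncard_pair (SL2_one_ne_neg_one h2)]

lemma commute_mk_iff (x y : SL₂ F) :
    Commute (x : SL₂ F ⧸ Subgroup.center (SL₂ F)) (y : SL₂ F ⧸ Subgroup.center (SL₂ F)) ↔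
      SignCommute x y := by
  rw [commute_iff_eq, ← QuotientGroup.mk_mul, ← QuotientGroup.mk_mul, QuotientGroup.eq,
    mem_center_SL2_iff, SignCommute, inv_mul_eq_one, inv_mul_eq_iff_eq_mul, mul_neg_one]
  refine or_congr Iff.rfl ⟨fun h => ?_, fun h => ?_⟩ <;> rw [h, neg_neg]

variable [Fintype F] [DecidableEq F]

lemma card_filter_axis_eq_zero (h2 : (2 : F) ≠ 0) : #{g : SL₂ F | axis g = 0} = 2 := by
  have : ({g : SL₂ F | axis g = 0} : Finset (SL₂ F)) = {1, -1} := by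
    ext g
    simp [axis_eq_zero_iff h2]
  rw [this, Finset.card_pair (SL2_one_ne_neg_one h2)]

lemma card_filter_parallel {x : F × F × F} (hx : x ≠ 0) :
    #{y : F × F × F | y ≠ 0 ∧ Parallel x y} = Fintype.card F - 1 := by
  rw [← Finset.card_univ, ← Finset.card_erase_of_mem (mem_univ (0 : F))]
  symm
  refine Finset.card_bij (fun c _ => c • x) ?_ ?_ ?_
  · intro c hc
    simp only [mem_filter, mem_univ, true_and]
    exact ⟨smul_ne_zero (Finset.ne_of_mem_erase hc) hx, parallel_smul_right (parallel_self x) c⟩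
  · intro c _ d _ h
    exact smul_left_injective F hx h
  · intro y hy
    simp only [mem_filter, mem_univ, true_and] at hy
    obtain ⟨c, rfl⟩ := hy.2.exists_smul hx
    refine ⟨c, ?_, rfl⟩
    simp only [mem_erase, mem_univ, and_true]
    rintro rfl
    simp at hy

/-- The centralizer in `SL₂` of a nonzero trace-zero matrix `x` is the norm-one conic of `F[x]`. -/
lemma card_filter_parallel_axis (h2 : (2 : F) ≠ 0) {x : F × F × F} (hx : x ≠ 0) :
    #{g : SL₂ F | Parallel x (axis g)} =
      #{y : F × F | y.1 ^ 2 - (x.1 ^ 2 + x.2.1 * x.2.2) * y.2 ^ 2 = 1} := by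
  symm
  obtain ⟨a, b, c⟩ := x
  refine Finset.card_bij (fun y hy => mkSL2 (y.1 + y.2 * a) (y.2 * b) (y.2 * c) (y.1 - y.2 * a)
    (by
      simp only [mem_filter, mem_univ, true_and] at hy
      linear_combination hy)) ?_ ?_ ?_
  · rintro ⟨u, v⟩ hy
    refine mem_filter.2 ⟨mem_univ _, ?_⟩
    simp only [Parallel, axis, mkSL2_zero_zero,
      mkSL2_zero_one, mkSL2_one_zero, mkSL2_one_one]
    refine ⟨by ring, by ring, by ring⟩
  · rintro ⟨u, v⟩ h ⟨u', v'⟩ h' heq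
    simp only [SL2_ext_iff, mkSL2_zero_zero, mkSL2_zero_one, mkSL2_one_zero,
      mkSL2_one_one] at heq
    obtain ⟨h1, h3, h4, h5⟩ := heq
    have hu : u = u' := by
      apply mul_left_cancel₀ h2; linear_combination h1 + h5
    subst hu
    have : v = v' := by
      simp only [ne_eq, Prod.mk_eq_zero] at hx
      by_contra hv
      simp [hv] at h1 h3 h4
      exact hx ⟨h1, h3, h4⟩
    rw [this]
  · intro g hg
    simp only [mem_filter, mem_univ, true_and] at hg
    obtain ⟨v, hv⟩ := hg.exists_smul hx
    simp only [axis, Prod.smul_mk, smul_eq_mul, Prod.mk.injEq] at hv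
    obtain ⟨h1, h3, h4⟩ := hv
    have hd := SL2_det g
    refine ⟨((g 0 0 + g 1 1) / 2, v / 2), ?_, ?_⟩
    · simp only [mem_filter, mem_univ, true_and]
      field_simp
      linear_combination 4 * hd + (g 0 0 - g 1 1 + v * a) * h1 + 2 * g 1 0 * h3 + v * b * h4
    · simp only [SL2_ext_iff, mkSL2_zero_zero, mkSL2_zero_one, mkSL2_one_zero, mkSL2_one_one]
      refine ⟨?_, ?_, ?_, ?_⟩ <;> field_simp <;> grind

lemma card_filter_parallel_axis_eq (hF : ringChar F ≠ 2) {x : F × F × F} (hx : x ≠ 0) :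
    (#{g : SL₂ F | Parallel x (axis g)} : ℤ) =
      if x.1 ^ 2 + x.2.1 * x.2.2 = 0 then 2 * (Fintype.card F : ℤ)
      else (Fintype.card F : ℤ) - quadraticChar F (x.1 ^ 2 + x.2.1 * x.2.2) := by
  rw [card_filter_parallel_axis (Ring.two_ne_zero hF) hx]
  split_ifs with h
  · rw [h, Finset.card_filter, Fintype.sum_prod_type_right]
    simp only [zero_mul, sub_zero, ← Finset.card_filter, sum_const, card_univ, nsmul_eq_mul]
    push_cast
    rw [card_filter_sq_eq hF, map_one]
    ring
  · exact card_filter_conic hF h one_ne_zero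

/-- Twice the sum over nonzero trace-zero `x` of the `s`-th power of the order of the centralizer
of `x`. -/
lemma two_mul_sum_card_parallel_axis_pow (hF : ringChar F ≠ 2) (s : ℕ) :
    2 * ∑ x : F × F × F with x ≠ 0, (#{g : SL₂ F | Parallel x (axis g)} : ℤ) ^ s =
      ((Fintype.card F : ℤ) - 1) * (2 * (Fintype.card F + 1) * (2 * Fintype.card F) ^ s +
        (Fintype.card F ^ 2 + Fintype.card F) * (Fintype.card F - 1) ^ s +
        (Fintype.card F ^ 2 - Fintype.card F) * (Fintype.card F + 1) ^ s) := by
  set n : ℤ := (Fintype.card F : ℤ) with hn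
  set k : F → ℤ := fun d => if d = 0 then 2 * n else n - quadraticChar F d with hk
  have hcongr : ∑ x : F × F × F with x ≠ 0, (#{g : SL₂ F | Parallel x (axis g)} : ℤ) ^ s =
      ∑ x : F × F × F with x ≠ 0, k (x.1 ^ 2 + x.2.1 * x.2.2) ^ s :=
    Finset.sum_congr rfl fun x hx => by
      rw [card_filter_parallel_axis_eq hF (mem_filter.1 hx).2]
  have hall : ∑ x : F × F × F, k (x.1 ^ 2 + x.2.1 * x.2.2) ^ s =
      ∑ d : F, (n ^ 2 + n * quadraticChar F d) * k d ^ s := by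
    rw [← Finset.sum_fiberwise univ (fun x : F × F × F => x.1 ^ 2 + x.2.1 * x.2.2)]
    refine Finset.sum_congr rfl fun d _ => ?_
    rw [← card_filter_sq_add_mul_eq hF d, ← nsmul_eq_mul, ← Finset.sum_const]
    exact Finset.sum_congr rfl fun x hx => by rw [(mem_filter.1 hx).2]
  have hzero : ∑ x : F × F × F with x ≠ 0, k (x.1 ^ 2 + x.2.1 * x.2.2) ^ s + (2 * n) ^ s =
      ∑ x : F × F × F, k (x.1 ^ 2 + x.2.1 * x.2.2) ^ s := by
    rw [Finset.filter_ne', ← Finset.sum_erase_add _ _ (mem_univ (0 : F × F × F))]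
    simp [hk]
  have hsplit (d : F) (hd : d ∈ univ.erase (0 : F)) :
      2 * ((n ^ 2 + n * quadraticChar F d) * k d ^ s) =
      ((n ^ 2 + n) * (n - 1) ^ s + (n ^ 2 - n) * (n + 1) ^ s) +
      quadraticChar F d * ((n ^ 2 + n) * (n - 1) ^ s - (n ^ 2 - n) * (n + 1) ^ s) := by
    have hd0 := Finset.ne_of_mem_erase hd
    simp only [hk, hd0, if_false]
    rcases quadraticChar_dichotomy hd0 with h | h <;> rw [h] <;> ring
  have hchi : ∑ d ∈ univ.erase (0 : F), quadraticChar F d = 0 := by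
    have := quadraticChar_sum_zero hF
    rwa [← Finset.sum_erase_add _ _ (mem_univ (0 : F)), quadraticChar_zero, add_zero] at this
  have hcard : (#(univ.erase (0 : F)) : ℤ) = n - 1 := by
    rw [Finset.card_erase_of_mem (mem_univ _), Finset.card_univ, Nat.cast_sub Fintype.card_pos]
    simp [hn]
  have hsum : 2 * ∑ d ∈ univ.erase (0 : F), (n ^ 2 + n * quadraticChar F d) * k d ^ s =
      (n - 1) * ((n ^ 2 + n) * (n - 1) ^ s + (n ^ 2 - n) * (n + 1) ^ s) := by
    rw [Finset.mul_sum, Finset.sum_congr rfl hsplit, Finset.sum_add_distrib, ← Finset.sum_mul,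
      hchi, Finset.sum_const, nsmul_eq_mul, hcard]
    ring
  rw [← Finset.sum_erase_add _ _ (mem_univ (0 : F)), quadraticChar_zero] at hall
  have hk0 : k 0 = 2 * n := by simp [hk]
  rw [hk0] at hall
  rw [hcongr]
  linear_combination 2 * hzero + 2 * hall + hsum

lemma card_filter_forall {α : Type*} [Fintype α] (P : α → Prop) [DecidablePred P] (s : ℕ) :
    #{t : Fin s → α | ∀ i, P (t i)} = #{a : α | P a} ^ s := by
  rw [← Fintype.card_piFinset_const]
  congr 1
  ext t
  simp

lemma card_filter_forall_axis_eq_zero (h2 : (2 : F) ≠ 0) (s : ℕ) :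
    #{t : Fin s → SL₂ F | ∀ i, axis (t i) = 0} = 2 ^ s :=
  (card_filter_forall (fun g : SL₂ F => axis g = 0) s).trans
    (congrArg (· ^ s) (card_filter_axis_eq_zero h2))

/-- The number of commuting tuples in `SL₂` over a finite field of odd characteristic. -/
lemma card_commuting_tuples_SL2 (hF : ringChar F ≠ 2) (s : ℕ) :
    2 * (#{t : Fin s → SL₂ F | ∀ i j, t i * t j = t j * t i} : ℤ) =
      2 * (Fintype.card F + 1) * (2 * Fintype.card F) ^ s +
        (Fintype.card F ^ 2 + Fintype.card F) * (Fintype.card F - 1) ^ s +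
        (Fintype.card F ^ 2 - Fintype.card F) * (Fintype.card F + 1) ^ s
        - 2 * (Fintype.card F ^ 2 + Fintype.card F) * 2 ^ s := by
  have h2 : (2 : F) ≠ 0 := Ring.two_ne_zero hF
  simp only [mul_eq_mul_swap_iff_parallel h2]
  set T : Finset (Fin s → SL₂ F) := {t | ∀ i j, Parallel (axis (t i)) (axis (t j))} with hT
  set U : Finset (Fin s → SL₂ F) := {t | ∃ i, axis (t i) ≠ 0} with hU
  have hcentral : #{t ∈ T | ∀ i, axis (t i) = 0} = 2 ^ s := by
    refine (congrArg Finset.card ?_).trans (card_filter_forall_axis_eq_zero h2 s)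
    ext t
    simp only [hT, mem_filter, mem_univ, true_and, and_iff_right_iff_imp]
    intro h i j
    rw [h i, h j]
    exact parallel_self 0
  have hadd := Finset.card_filter_add_card_filter_not (s := T) (fun t => ∀ i, axis (t i) = 0)
  have hdouble := Finset.sum_card_bipartiteAbove_eq_sum_card_bipartiteBelow
    (fun (x : F × F × F) (t : Fin s → SL₂ F) => ∀ i, Parallel x (axis (t i)))
    (s := ({x | x ≠ 0} : Finset (F × F × F))) (t := U)
  have hbelow : ∀ t ∈ U, #(bipartiteBelow
      (fun (x : F × F × F) (t : Fin s → SL₂ F) => ∀ i, Parallel x (axis (t i)))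
      ({x | x ≠ 0} : Finset (F × F × F)) t) =
      if ∀ i j, Parallel (axis (t i)) (axis (t j)) then Fintype.card F - 1 else 0 := by
    intro t ht
    obtain ⟨i, hi⟩ := (mem_filter.1 ht).2
    split_ifs with h
    · rw [← card_filter_parallel hi]
      congr 1
      ext x
      simp only [bipartiteBelow, mem_filter, mem_univ, true_and, and_congr_right_iff]
      exact fun hx => ⟨fun H => (H i).symm, fun H j => H.symm.trans (h i j) hi⟩
    · rw [Finset.card_eq_zero, Finset.eq_empty_iff_forall_notMem]
      intro x hx
      simp only [bipartiteBelow, mem_filter, mem_univ, true_and] at hx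
      exact h fun i j => (hx.2 i).symm.trans (hx.2 j) hx.1
  have habove : ∀ x ∈ ({x | x ≠ 0} : Finset (F × F × F)), (#(bipartiteAbove
      (fun (x : F × F × F) (t : Fin s → SL₂ F) => ∀ i, Parallel x (axis (t i))) U x) : ℤ) =
      (#{g : SL₂ F | Parallel x (axis g)} : ℤ) ^ s - 2 ^ s := by
    intro x hx
    have h := Finset.card_filter_add_card_filter_not
      (s := ({t | ∀ i, Parallel x (axis (t i))} : Finset (Fin s → SL₂ F)))
      (fun t => ∀ i, axis (t i) = 0)
    rw [card_filter_forall (fun g : SL₂ F => Parallel x (axis g))] at h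
    have h' : #{t ∈ ({t | ∀ i, Parallel x (axis (t i))} : Finset (Fin s → SL₂ F)) |
        ∀ i, axis (t i) = 0} = 2 ^ s := by
      refine (congrArg Finset.card ?_).trans (card_filter_forall_axis_eq_zero h2 s)
      ext t
      simp only [mem_filter, mem_univ, true_and, and_iff_right_iff_imp]
      intro h i
      rw [h i]
      simp [Parallel]
    rw [h'] at h
    have h'' : bipartiteAbove
        (fun (x : F × F × F) (t : Fin s → SL₂ F) => ∀ i, Parallel x (axis (t i))) U x =
        {t ∈ ({t | ∀ i, Parallel x (axis (t i))} : Finset (Fin s → SL₂ F)) |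
          ¬ ∀ i, axis (t i) = 0} := by
      ext t
      simp only [bipartiteAbove, hU, mem_filter, mem_univ, true_and, not_forall, ne_eq, and_comm]
    rw [h'']
    have h3 : ((2 ^ s : ℕ) : ℤ) = 2 ^ s := by push_cast; rfl
    rw [← h3, ← Nat.cast_pow, ← h]
    push_cast
    ring
  have hUT : ({t ∈ U | ∀ i j, Parallel (axis (t i)) (axis (t j))} : Finset (Fin s → SL₂ F)) =
      {t ∈ T | ¬ ∀ i, axis (t i) = 0} := by
    ext t
    simp only [hU, hT, mem_filter, mem_univ, true_and, not_forall, ne_eq, and_comm]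
  rw [Finset.sum_congr rfl hbelow, ← Finset.sum_filter, Finset.sum_const, hUT,
    smul_eq_mul] at hdouble
  have hdouble' := congrArg (Nat.cast : ℕ → ℤ) hdouble
  rw [Nat.cast_sum, Finset.sum_congr rfl habove, Finset.sum_sub_distrib, Finset.sum_const,
    nsmul_eq_mul, Finset.filter_ne', Finset.card_erase_of_mem (mem_univ _), Finset.card_univ,
    ← Finset.filter_ne', Nat.cast_mul, Nat.cast_sub Fintype.card_pos,
    Nat.cast_sub Fintype.card_pos, Fintype.card_prod, Fintype.card_prod] at hdouble'
  have hmain := two_mul_sum_card_parallel_axis_pow hF s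
  have h1 : (1 : ℤ) < Fintype.card F := by exact_mod_cast Fintype.one_lt_card
  have h2 : ((Fintype.card F : ℤ) - 1) ≠ 0 := by lia
  apply mul_left_cancel₀ h2
  rw [← hadd, hcentral]
  push_cast at hdouble' ⊢
  linear_combination hmain - 2 * hdouble'

lemma card_filter_anticommute_conj (g x : SL₂ F) :
    #{y : SL₂ F | (g * x * g⁻¹) * y = -(y * (g * x * g⁻¹))} =
      #{y : SL₂ F | x * y = -(y * x)} := by
  symm
  refine Finset.card_equiv (MulAut.conj g).toEquiv fun y => ?_
  simp only [mem_filter, mem_univ, true_and, MulEquiv.toEquiv_eq_coe, EquivLike.coe_coe,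
    MulAut.conj_apply]
  have h1 : g * x * g⁻¹ * (g * y * g⁻¹) = g * (x * y) * g⁻¹ := by group
  have h2 : g * y * g⁻¹ * (g * x * g⁻¹) = g * (y * x) * g⁻¹ := by group
  have h3 : -(g * (y * x) * g⁻¹) = g * -(y * x) * g⁻¹ := by rw [mul_neg, neg_mul]
  rw [h1, h2, h3, mul_left_inj, mul_right_inj]

lemma card_filter_anticommute_of_ne_zero (hF : ringChar F ≠ 2) {x : SL₂ F}
    (hx : x 0 0 + x 1 1 = 0) (hc : x 1 0 ≠ 0) :
    (#{y : SL₂ F | x * y = -(y * x)} : ℤ) = Fintype.card F - quadraticChar F (-1) := by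
  rw [← card_filter_conic hF (neg_ne_zero.2 (one_ne_zero (α := F)))
    (neg_ne_zero.2 (one_ne_zero (α := F)))]
  congr 1
  symm
  have hd := SL2_det x
  have hx' : x 1 1 = - x 0 0 := by linear_combination hx
  rw [hx'] at hd
  refine Finset.card_bij (fun z hz => mkSL2 (z.1 + x 0 0 * z.2)
    (-(2 * x 0 0 * z.1 + ((x 0 0) ^ 2 - 1) * z.2) / x 1 0) (x 1 0 * z.2) (-(z.1 + x 0 0 * z.2))
    (by
      simp only [mem_filter, mem_univ, true_and] at hz
      field_simp
      linear_combination -hz)) ?_ ?_ ?_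
  · rintro ⟨u, v⟩ hz
    refine mem_filter.2 ⟨mem_univ _, ?_⟩
    simp only [SL2_ext_iff, Matrix.SpecialLinearGroup.coe_neg, Matrix.neg_apply, SL2_mul_apply,
      mkSL2_zero_zero, mkSL2_zero_one, mkSL2_one_zero, mkSL2_one_one, hx']
    refine ⟨?_, ?_, ?_, ?_⟩ <;> field_simp <;> grind
  · rintro ⟨u, v⟩ h ⟨u', v'⟩ h' heq
    simp only [SL2_ext_iff, mkSL2_zero_zero, mkSL2_zero_one, mkSL2_one_zero,
      mkSL2_one_one] at heq
    obtain ⟨h1, h3, h4, h5⟩ := heq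
    have hv : v = v' := mul_left_cancel₀ hc h4
    subst hv
    rw [add_right_cancel h1]
  · intro y hy
    have hyd := SL2_det y
    simp only [mem_filter, mem_univ, true_and, SL2_ext_iff, Matrix.SpecialLinearGroup.coe_neg,
      Matrix.neg_apply, SL2_mul_apply, hx'] at hy
    obtain ⟨h1, h3, h4, h5⟩ := hy
    have hy' : y 1 1 = - y 0 0 := by
      apply mul_left_cancel₀ hc; linear_combination h4
    rw [hy'] at hyd h5
    refine ⟨(y 0 0 - x 0 0 * (y 1 0 / x 1 0), y 1 0 / x 1 0), ?_, ?_⟩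
    · simp only [mem_filter, mem_univ, true_and]
      field_simp
      grind
    · simp only [SL2_ext_iff, mkSL2_zero_zero, mkSL2_zero_one, mkSL2_one_zero, mkSL2_one_one]
      refine ⟨?_, ?_, ?_, ?_⟩ <;> field_simp <;> grind

lemma card_filter_anticommute (hF : ringChar F ≠ 2) {x : SL₂ F} (hx : x 0 0 + x 1 1 = 0) :
    (#{y : SL₂ F | x * y = -(y * x)} : ℤ) = Fintype.card F - quadraticChar F (-1) := by
  have h2 : (2 : F) ≠ 0 := Ring.two_ne_zero hF
  by_cases hc : x 1 0 = 0
  · have hx' : x 1 1 = - x 0 0 := by linear_combination hx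
    have hd := SL2_det x
    rw [hc, hx'] at hd
    have ha : x 0 0 ≠ 0 := fun h => by simp [h] at hd
    obtain ⟨k, hk⟩ : ∃ k : F, k * (2 * x 0 0 - k * x 0 1) ≠ 0 := by
      by_contra! h
      have h1 := h 1
      have h3 := h (-1)
      exact mul_ne_zero (mul_ne_zero h2 h2) ha (by linear_combination h1 - h3)
    set g : SL₂ F := mkSL2 1 0 k 1 (by ring) with hg
    have hinv : g⁻¹ = mkSL2 1 0 (-k) 1 (by ring) := by
      rw [inv_eq_iff_mul_eq_one]
      simp [hg, SL2_ext_iff, SL2_mul_apply]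
    rw [← card_filter_anticommute_conj g]
    refine card_filter_anticommute_of_ne_zero hF ?_ ?_
    · simp only [SL2_mul_apply, hinv]
      simp [hg]
      linear_combination hx
    · simp only [SL2_mul_apply, hinv]
      simp [hg, hc, hx']
      intro h
      exact hk (by linear_combination h)
  · exact card_filter_anticommute_of_ne_zero hF hx hc

lemma card_filter_trace_eq_zero (hF : ringChar F ≠ 2) :
    (#{x : SL₂ F | x 0 0 + x 1 1 = 0} : ℤ) =
      Fintype.card F ^ 2 + Fintype.card F * quadraticChar F (-1) := by
  rw [← card_filter_sq_add_mul_eq hF (-1)]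
  congr 1
  refine Finset.card_bij' (fun x _ => (x 0 0, x 0 1, x 1 0)) (fun y hy => mkSL2 y.1 y.2.1 y.2.2
    (-y.1) (by
      simp only [mem_filter, mem_univ, true_and] at hy
      linear_combination -hy)) ?_ ?_ ?_ ?_
  · intro x hx
    simp only [mem_filter, mem_univ, true_and] at hx ⊢
    linear_combination x 0 0 * hx - SL2_det x
  · intro y hy
    refine mem_filter.2 ⟨mem_univ _, ?_⟩
    simp
  · intro x hx
    simp only [mem_filter, mem_univ, true_and] at hx
    simp only [SL2_ext_iff, mkSL2_zero_zero, mkSL2_zero_one, mkSL2_one_zero, mkSL2_one_one,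
      true_and]
    linear_combination -hx
  · intro y hy
    simp

/-- The number of anticommuting pairs in `SL₂`. -/
lemma card_anticommuting_pairs (hF : ringChar F ≠ 2) :
    (#{x : SL₂ F × SL₂ F | x.1 * x.2 = -(x.2 * x.1)} : ℤ) =
      Fintype.card F * (Fintype.card F ^ 2 - 1) := by
  rw [Finset.card_filter, Fintype.sum_prod_type]
  have h (x : SL₂ F) : ((∑ y : SL₂ F, if x * y = -(y * x) then 1 else 0 : ℕ) : ℤ) =
      if x 0 0 + x 1 1 = 0 then (Fintype.card F : ℤ) - quadraticChar F (-1) else 0 := by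
    rw [← Finset.card_filter]
    split_ifs with hx
    · exact card_filter_anticommute hF hx
    · rw [Nat.cast_eq_zero, Finset.card_eq_zero, Finset.eq_empty_iff_forall_notMem]
      intro y hy
      exact hx (trace_eq_zero_of_anticommute (Ring.two_ne_zero hF) (mem_filter.1 hy).2)
  push_cast at h ⊢
  simp only [h]
  rw [← Finset.sum_filter, Finset.sum_const, nsmul_eq_mul, card_filter_trace_eq_zero hF]
  have hsq : quadraticChar F (-1) ^ 2 = 1 := quadraticChar_sq_one (neg_ne_zero.2 one_ne_zero)
  linear_combination -(Fintype.card F : ℤ) * hsq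

lemma card_filter_pairing (s : ℕ) :
    (#{w : Fin s → Bool × Bool × Bool | ∃ i j, pairing (w i) (w j) = true} : ℤ) =
      2 ^ s * ((2 ^ s - 1) * (2 ^ s - 2)) := by
  have hcard : #{w : Fin s → Bool × Bool × Bool | ∃ i j, pairing (w i) (w j) = true} =
      #((univ : Finset (Fin s → Bool)) ×ˢ
        ((univ : Finset (Fin s → Bool)).erase (fun _ => false)).offDiag) := by
    refine Finset.card_nbij' (fun w => (fun i => (w i).1, fun i => (w i).2.1, fun i => (w i).2.2))
      (fun x i => (x.1 i, x.2.1 i, x.2.2 i)) ?_ ?_ ?_ ?_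
    · intro w hw
      simp only [coe_filter, mem_univ, true_and, Set.mem_ofPred_eq] at hw
      obtain ⟨i, j, h⟩ := hw
      simp only [coe_product, coe_univ, Set.mem_prod, Set.mem_univ, true_and, mem_coe,
        mem_offDiag, mem_erase, mem_univ, and_true]
      refine ⟨fun h' => ?_, fun h' => ?_, fun h' => ?_⟩
      · simp [pairing, congrFun h' i, congrFun h' j] at h
      · simp [pairing, congrFun h' i, congrFun h' j] at h
      · have h1 : (w i).2.1 = (w i).2.2 := congrFun h' i
        have h2 : (w j).2.1 = (w j).2.2 := congrFun h' j
        rw [pairing, h1, h2, Bool.and_comm] at h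
        simp at h
    · rintro ⟨e, u, v⟩ hx
      simp only [coe_product, coe_univ, Set.mem_prod, Set.mem_univ, true_and, mem_coe,
        mem_offDiag, mem_erase, mem_univ, and_true] at hx
      obtain ⟨hu, hv, huv⟩ := hx
      refine mem_coe.2 (mem_filter.2 ⟨mem_univ _, ?_⟩)
      simp only [pairing]
      obtain ⟨i, hi⟩ := Function.ne_iff.1 hu
      obtain ⟨j, hj⟩ := Function.ne_iff.1 hv
      obtain ⟨k, hk⟩ := Function.ne_iff.1 huv
      by_contra! H
      have hij := H i j
      have hik := H i k
      have hjk := H j k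
      revert hi hj hk hij hik hjk
      cases u i <;> cases v i <;> cases u j <;> cases v j <;> cases u k <;> cases v k <;> simp
    · intro w _
      rfl
    · rintro ⟨e, u, v⟩ _
      rfl
  rw [hcard, Finset.card_product, Finset.offDiag_card, Finset.card_erase_of_mem (mem_univ _),
    Finset.card_univ, Fintype.card_fun, Fintype.card_bool, Fintype.card_fin, Nat.cast_mul,
    Nat.cast_sub (Nat.le_mul_self _), Nat.cast_mul, Nat.cast_sub Nat.one_le_two_pow]
  push_cast
  ring

/-- The number of tuples in `SL₂` commuting up to sign, but not commuting. -/
lemma card_signCommuting_not_commuting (hF : ringChar F ≠ 2) (s : ℕ) :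
    24 * (#{t : Fin s → SL₂ F | (∀ i j, SignCommute (t i) (t j)) ∧
        ∃ i j, t i * t j ≠ t j * t i} : ℤ) =
      Fintype.card F * (Fintype.card F ^ 2 - 1) * (2 ^ s * ((2 ^ s - 1) * (2 ^ s - 2))) := by
  have h2 : (2 : F) ≠ 0 := Ring.two_ne_zero hF
  set P : Finset (SL₂ F × SL₂ F) := {x | x.1 * x.2 = -(x.2 * x.1)} with hP
  set W : Finset (Fin s → SL₂ F) := {t | (∀ i j, SignCommute (t i) (t j)) ∧
        ∃ i j, t i * t j ≠ t j * t i} with hW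
  have hdouble := Finset.sum_card_bipartiteAbove_eq_sum_card_bipartiteBelow
    (fun (x : SL₂ F × SL₂ F) (t : Fin s → SL₂ F) =>
      ∀ k, SignCommute (t k) x.1 ∧ SignCommute (t k) x.2) (s := P) (t := W)
  have hbelow : ∀ t ∈ W, #(bipartiteBelow (fun (x : SL₂ F × SL₂ F) (t : Fin s → SL₂ F) =>
      ∀ k, SignCommute (t k) x.1 ∧ SignCommute (t k) x.2) P t) = 24 := by
    intro t ht
    obtain ⟨hs, i, j, hij⟩ := (mem_filter.1 ht).2
    have hanti := (hs i j).resolve_left hij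
    have h24 : #{x : (Bool × Bool × Bool) × (Bool × Bool × Bool) | pairing x.1 x.2 = true} = 24 :=
      by decide
    rw [← h24]
    symm
    refine Finset.card_bij (fun x _ => (quat (t i) (t j) x.1, quat (t i) (t j) x.2)) ?_ ?_ ?_
    · rintro ⟨w, z⟩ hwz
      simp only [mem_filter, mem_univ, true_and] at hwz
      simp only [bipartiteBelow, hP, mem_filter, mem_univ, true_and]
      refine ⟨(quat_anticommute_iff h2 hanti w z).2 hwz, fun k => ?_⟩
      obtain ⟨y, hy⟩ := exists_quat_eq h2 hanti (hs k i) (hs k j)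
      rw [← hy]
      exact ⟨signCommute_quat hanti _ _, signCommute_quat hanti _ _⟩
    · rintro ⟨w, z⟩ _ ⟨w', z'⟩ _ h
      simp only [Prod.mk.injEq] at h
      rw [quat_injective h2 hanti h.1, quat_injective h2 hanti h.2]
    · rintro ⟨a, b⟩ hx
      simp only [bipartiteBelow, hP, mem_filter, mem_univ, true_and] at hx
      obtain ⟨hab, hk⟩ := hx
      obtain ⟨w, rfl⟩ := exists_quat_eq h2 hanti (hk i).1.symm (hk j).1.symm
      obtain ⟨z, rfl⟩ := exists_quat_eq h2 hanti (hk i).2.symm (hk j).2.symm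
      refine ⟨(w, z), ?_, rfl⟩
      simp only [mem_filter, mem_univ, true_and]
      exact (quat_anticommute_iff h2 hanti w z).1 hab
  have habove : ∀ x ∈ P, (#(bipartiteAbove (fun (x : SL₂ F × SL₂ F) (t : Fin s → SL₂ F) =>
      ∀ k, SignCommute (t k) x.1 ∧ SignCommute (t k) x.2) W x) : ℤ) =
      2 ^ s * ((2 ^ s - 1) * (2 ^ s - 2)) := by
    rintro ⟨a, b⟩ hx
    have hab : a * b = -(b * a) := (mem_filter.1 hx).2
    have hqa : quat a b (false, true, false) = a := by simp [quat]
    have hqb : quat a b (false, false, true) = b := by simp [quat]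
    rw [← card_filter_pairing s]
    congr 1
    symm
    refine Finset.card_bij (fun w _ k => quat a b (w k)) ?_ ?_ ?_
    · intro w hw
      obtain ⟨i, j, hij⟩ := (mem_filter.1 hw).2
      simp only [bipartiteAbove, hW, mem_filter, mem_univ, true_and]
      refine ⟨⟨fun i j => signCommute_quat hab _ _, i, j, ?_⟩, fun k => ⟨?_, ?_⟩⟩
      · rw [ne_eq, quat_commute_iff h2 hab, hij]
        simp
      · conv_rhs => rw [← hqa]
        exact signCommute_quat hab _ _
      · conv_rhs => rw [← hqb]
        exact signCommute_quat hab _ _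
    · intro w _ z _ h
      funext k
      exact quat_injective h2 hab (congrFun h k)
    · intro t ht
      simp only [bipartiteAbove, hW, mem_filter, mem_univ, true_and] at ht
      obtain ⟨⟨_, i, j, hij⟩, hk⟩ := ht
      choose w hw using fun k => exists_quat_eq h2 hab (hk k).1 (hk k).2
      refine ⟨w, mem_filter.2 ⟨mem_univ _, i, j, ?_⟩, funext hw⟩
      rw [← hw i, ← hw j, ne_eq, quat_commute_iff h2 hab] at hij
      simpa using hij
  rw [Finset.sum_congr rfl hbelow, Finset.sum_const, smul_eq_mul] at hdouble
  have hdouble' := congrArg (Nat.cast : ℕ → ℤ) hdouble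
  rw [Nat.cast_sum, Finset.sum_congr rfl habove, Finset.sum_const, nsmul_eq_mul,
    card_anticommuting_pairs hF] at hdouble'
  push_cast at hdouble'
  linear_combination -hdouble'

/-- The number of tuples in `SL₂` commuting up to sign. -/
lemma card_signCommuting_tuples (hF : ringChar F ≠ 2) (s : ℕ) :
    24 * (#{t : Fin s → SL₂ F | ∀ i j, SignCommute (t i) (t j)} : ℤ) =
      12 * (2 * (Fintype.card F + 1) * (2 * Fintype.card F) ^ s +
        (Fintype.card F ^ 2 + Fintype.card F) * (Fintype.card F - 1) ^ s +
        (Fintype.card F ^ 2 - Fintype.card F) * (Fintype.card F + 1) ^ s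
        - 2 * (Fintype.card F ^ 2 + Fintype.card F) * 2 ^ s) +
      Fintype.card F * (Fintype.card F ^ 2 - 1) * (2 ^ s * ((2 ^ s - 1) * (2 ^ s - 2))) := by
  have hadd := Finset.card_filter_add_card_filter_not
    (s := ({t | ∀ i j, SignCommute (t i) (t j)} : Finset (Fin s → SL₂ F)))
    (fun t : Fin s → SL₂ F => ∀ i j, t i * t j = t j * t i)
  rw [Finset.filter_filter, Finset.filter_filter] at hadd
  have h1 : Finset.filter (fun t : Fin s → SL₂ F => (∀ i j, SignCommute (t i) (t j)) ∧
      ∀ i j, t i * t j = t j * t i) univ =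
      Finset.filter (fun t : Fin s → SL₂ F => ∀ i j, t i * t j = t j * t i) univ := by
    ext t
    simp only [mem_filter, mem_univ, true_and, and_iff_right_iff_imp]
    exact fun h i j => Or.inl (h i j)
  simp only [not_forall, ← ne_eq] at hadd
  rw [h1] at hadd
  rw [← hadd, ← card_signCommuting_not_commuting hF s, ← card_commuting_tuples_SL2 hF s]
  push_cast
  ring

lemma card_commuting_tuples_PSL2 (h2 : (2 : F) ≠ 0) (s : ℕ) :
    Nat.card {t : Fin s → SL₂ F ⧸ Subgroup.center (SL₂ F) // ∀ i j, Commute (t i) (t j)} *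
      2 ^ s = #{t : Fin s → SL₂ F | ∀ i j, SignCommute (t i) (t j)} := by
  have hpow : Nat.card (Fin s → Subgroup.center (SL₂ F)) = 2 ^ s := by
    rw [Nat.card_fun, card_center_SL2 h2, Nat.card_fin]
  have hmk (q : SL₂ F ⧸ Subgroup.center (SL₂ F)) (z : Subgroup.center (SL₂ F)) :
      ((q.out * z : SL₂ F) : SL₂ F ⧸ Subgroup.center (SL₂ F)) = q := by
    rw [QuotientGroup.mk_mul_of_mem _ z.2, QuotientGroup.out_eq']
  rw [← hpow, ← Nat.card_prod, ← Fintype.card_subtype, ← Nat.card_eq_fintype_card]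
  refine Nat.card_congr (Equiv.ofBijective
    (fun x => ⟨fun i => (x.1.1 i).out * x.2 i, fun i j => ?_⟩) ⟨?_, ?_⟩)
  · rw [← commute_mk_iff, hmk, hmk]
    exact x.1.2 i j
  · rintro ⟨⟨t, ht⟩, z⟩ ⟨⟨t', ht'⟩, z'⟩ h
    have h' (i : Fin s) : (t i).out * (z i : SL₂ F) = (t' i).out * (z' i : SL₂ F) :=
      congrFun (congrArg Subtype.val h) i
    have ht : t = t' := by
      funext i
      rw [← hmk (t i) (z i), h' i, hmk]
    subst ht
    have hz : z = z' := by
      funext i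
      exact Subtype.ext (mul_left_cancel (h' i))
    rw [hz]
  · rintro ⟨t, ht⟩
    refine ⟨⟨⟨fun i => (t i : SL₂ F ⧸ Subgroup.center (SL₂ F)), fun i j =>
      (commute_mk_iff _ _).2 (ht i j)⟩, fun i =>
      ⟨((t i : SL₂ F ⧸ Subgroup.center (SL₂ F)).out)⁻¹ * t i, ?_⟩⟩, ?_⟩
    · rw [← QuotientGroup.eq, QuotientGroup.out_eq']
    · apply Subtype.ext
      funext i
      simp

end CommutingTuples

/-- Let `p > 3` be a prime, `q = (p-1)/2`, `r = (p+1)/2`, and let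
`G = PSL(2, F_p)` (the quotient of `SL(2, F_p)` by its center).  Then for every `s ≥ 1`
the number of commuting `s`-tuples in `G` is
`(p+1)·p^s + pr·q^s + pq·r^s + (pqr/6)·4^s − (pqr/2)·2^s − (p + pr + pq − pqr/3)`. -/
theorem stmt_4 (p : ℕ) (hp : p.Prime) (hp3 : 3 < p) (q r : ℚ)
    (hq : q = ((p : ℚ) - 1) / 2) (hr : r = ((p : ℚ) + 1) / 2)
    (s : ℕ) (hs : 1 ≤ s) :
    (Nat.card {t : Fin s →
        (Matrix.SpecialLinearGroup (Fin 2) (ZMod p) ⧸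
          Subgroup.center (Matrix.SpecialLinearGroup (Fin 2) (ZMod p))) //
        ∀ i j, Commute (t i) (t j)} : ℚ)
      = ((p : ℚ) + 1) * (p : ℚ) ^ s + (p : ℚ) * r * q ^ s + (p : ℚ) * q * r ^ s
        + ((p : ℚ) * q * r / 6) * 4 ^ s - ((p : ℚ) * q * r / 2) * 2 ^ s
        - ((p : ℚ) + (p : ℚ) * r + (p : ℚ) * q - (p : ℚ) * q * r / 3) := by
  have : Fact p.Prime := ⟨hp⟩
  have hchar : ringChar (ZMod p) ≠ 2 := by
    rw [ZMod.ringChar_zmod_n]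
    lia
  have hcard := card_commuting_tuples_PSL2 (F := ZMod p) (Ring.two_ne_zero hchar) s
  have hmain := card_signCommuting_tuples hchar s
  rw [← hcard, ZMod.card] at hmain
  set N := Nat.card {t : Fin s →
    (Matrix.SpecialLinearGroup (Fin 2) (ZMod p) ⧸
      Subgroup.center (Matrix.SpecialLinearGroup (Fin 2) (ZMod p))) //
    ∀ i j, Commute (t i) (t j)}
  have hmain' := congrArg (Int.cast : ℤ → ℚ) hmain
  push_cast at hmain'
  have hp1 : (p : ℚ) - 1 = 2 * q := by rw [hq]; ring
  have hp2 : (p : ℚ) + 1 = 2 * r := by rw [hr]; ring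
  rw [hp1, hp2, mul_pow, mul_pow, mul_pow] at hmain'
  have h4 : (4 : ℚ) ^ s = 2 ^ s * 2 ^ s := by rw [← mul_pow]; norm_num
  have hs2 : (24 : ℚ) * 2 ^ s ≠ 0 := by positivity
  apply mul_left_cancel₀ hs2
  rw [h4]
  have hpq : (p : ℚ) = 2 * q + 1 := by linear_combination hp1
  have hrq : r = q + 1 := by rw [hq, hr]; ring
  rw [hpq, hrq] at hmain' ⊢
  linear_combination hmain'
end

section
/- Let n = 2k be an even integer with k ≥ 2, and let D_{2n} be the dihedral group of order 2n. Then for every integer s ≥ 1, the number of commuting s-tuples in D_{2n} satisfies |Hom(ℤ^s, D_{2n})| = n^s + k·4^s − k·2^s. -/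
namespace DihedralGroup

theorem commute_r_r {n : ℕ} (i j : ZMod n) : Commute (r i) (r j) := by
  simp [Commute, SemiconjBy, add_comm]

theorem commute_r_sr_iff {n : ℕ} (i j : ZMod n) : Commute (r i) (sr j) ↔ 2 * i = 0 := by
  simp only [Commute, SemiconjBy, r_mul_sr, sr_mul_r, sr.injEq]
  constructor <;> intro h <;> linear_combination -h

theorem commute_sr_sr_iff {n : ℕ} (i j : ZMod n) :
    Commute (sr i) (sr j) ↔ 2 * (i - j) = 0 := by
  simp only [Commute, SemiconjBy, sr_mul_sr, r.injEq]
  constructor <;> intro h <;> linear_combination -h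

end DihedralGroup

theorem ZMod.natCast_self_ne_zero_of_two_mul {k : ℕ} (hk : 0 < k) :
    (k : ZMod (2 * k)) ≠ 0 := by
  rw [Ne, ZMod.natCast_eq_zero_iff]
  intro h
  have := Nat.le_of_dvd hk h
  omega

theorem ZMod.two_mul_eq_zero_iff {k : ℕ} (hk : 0 < k) (x : ZMod (2 * k)) :
    2 * x = 0 ↔ x = 0 ∨ x = k := by
  have : NeZero (2 * k) := ⟨by omega⟩
  constructor
  · intro h
    have hx := ZMod.natCast_zmod_val x
    have hlt := ZMod.val_lt x
    have hdvd : 2 * k ∣ 2 * x.val := by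
      rw [← ZMod.natCast_eq_zero_iff]
      push_cast
      rw [hx, h]
    obtain ⟨m, hm⟩ := Nat.dvd_of_mul_dvd_mul_left two_pos hdvd
    have hm2 : m < 2 := by
      by_contra! hge
      nlinarith
    interval_cases m
    · left
      rw [← hx, hm]
      simp
    · right
      rw [← hx, hm]
      simp
  · rintro (rfl | rfl)
    · simp
    · exact_mod_cast ZMod.natCast_self (2 * k)

theorem ZMod.exists_lt_two_mul_sub_eq_zero {k : ℕ} (hk : 0 < k) (x : ZMod (2 * k)) :
    ∃ c < k, 2 * (x - (c : ZMod (2 * k))) = 0 := by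
  have : NeZero (2 * k) := ⟨by omega⟩
  have hx := ZMod.natCast_zmod_val x
  have hlt := ZMod.val_lt x
  rcases lt_or_ge x.val k with h | h
  · exact ⟨x.val, h, by simp [hx]⟩
  · refine ⟨x.val - k, by omega, ?_⟩
    rw [ZMod.two_mul_eq_zero_iff hk, Nat.cast_sub h, hx]
    right
    ring

theorem ZMod.eq_of_two_mul_natCast_sub_eq_zero {k c d : ℕ} (hc : c < k) (hd : d < k)
    (h : 2 * ((c : ZMod (2 * k)) - d) = 0) : c = d := by
  have h' : ((2 * c : ℕ) : ZMod (2 * k)) = (2 * d : ℕ) := by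
    push_cast
    linear_combination h
  rw [ZMod.natCast_eq_natCast_iff', Nat.mod_eq_of_lt (by omega), Nat.mod_eq_of_lt (by omega)] at h'
  omega

namespace DihedralGroup

/-- The rotations of the regular `n`-gon. -/
def rotations (n : ℕ) [NeZero n] : Finset (DihedralGroup n) :=
  Finset.univ.map ⟨r, fun _ _ h => r.inj h⟩

/-- The rotations of order dividing two in the symmetry group of the regular `2 * k`-gon. -/
def centralRotations (k : ℕ) : Finset (DihedralGroup (2 * k)) := {r 0, r k}

/-- The elements commuting with the reflection `sr c` of the regular `2 * k`-gon. -/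
def reflectionCentralizer (k : ℕ) (c : ZMod (2 * k)) : Finset (DihedralGroup (2 * k)) :=
  {r 0, r k, sr c, sr (c + (k : ZMod (2 * k)))}

theorem r_mem_rotations {n : ℕ} [NeZero n] (i : ZMod n) : r i ∈ rotations n :=
  Finset.mem_map_of_mem _ (Finset.mem_univ i)

theorem sr_notMem_rotations {n : ℕ} [NeZero n] (i : ZMod n) : sr i ∉ rotations n := by
  simp [rotations]

theorem card_rotations (n : ℕ) [NeZero n] : (rotations n).card = n := by
  simp [rotations]

section EvenPolygon

variable {k : ℕ}

theorem r_mem_centralRotations (hk : 0 < k) (i : ZMod (2 * k)) :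
    r i ∈ centralRotations k ↔ 2 * i = 0 := by
  rw [ZMod.two_mul_eq_zero_iff hk, centralRotations, Finset.mem_insert, Finset.mem_singleton,
    r.injEq, r.injEq]

theorem sr_notMem_centralRotations (i : ZMod (2 * k)) : sr i ∉ centralRotations k := by
  simp [centralRotations, -r_zero]

theorem card_centralRotations (hk : 0 < k) : (centralRotations k).card = 2 :=
  Finset.card_pair fun h => ZMod.natCast_self_ne_zero_of_two_mul hk (r.inj h).symm

theorem centralRotations_subset (c : ZMod (2 * k)) :
    centralRotations k ⊆ reflectionCentralizer k c := by
  intro g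
  simp only [centralRotations, reflectionCentralizer, Finset.mem_insert, Finset.mem_singleton]
  tauto

theorem mem_reflectionCentralizer (hk : 0 < k) (c : ZMod (2 * k)) (g : DihedralGroup (2 * k)) :
    g ∈ reflectionCentralizer k c ↔ Commute g (sr c) := by
  rcases g with i | i
  · rw [commute_r_sr_iff, ZMod.two_mul_eq_zero_iff hk]
    simp [reflectionCentralizer, -r_zero]
  · rw [commute_sr_sr_iff, ZMod.two_mul_eq_zero_iff hk, sub_eq_zero, sub_eq_iff_eq_add, add_comm]
    simp [reflectionCentralizer, -r_zero]

theorem card_reflectionCentralizer (hk : 0 < k) (c : ZMod (2 * k)) :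
    (reflectionCentralizer k c).card = 4 := by
  have h := ZMod.natCast_self_ne_zero_of_two_mul hk
  rw [reflectionCentralizer, Finset.card_insert_of_notMem, Finset.card_insert_of_notMem,
    Finset.card_pair] <;> simp [h, h.symm, -r_zero]

theorem commute_of_commute_sr {n : ℕ} {c : ZMod n} {g h : DihedralGroup n}
    (hg : Commute g (sr c)) (hh : Commute h (sr c)) : Commute g h := by
  rcases g with i | i <;> rcases h with j | j
  · exact commute_r_r i j
  · rwa [commute_r_sr_iff] at hg ⊢
  · rw [commute_r_sr_iff] at hh
    exact ((commute_r_sr_iff j i).2 hh).symm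
  · rw [commute_sr_sr_iff] at *
    linear_combination hg - hh

theorem exists_sr_of_notMem_centralRotations (hk : 0 < k) {c : ZMod (2 * k)}
    {g : DihedralGroup (2 * k)} (hg : Commute g (sr c)) (hz : g ∉ centralRotations k) :
    ∃ x, g = sr x := by
  rcases g with i | i
  · rw [commute_r_sr_iff] at hg
    exact absurd ((r_mem_centralRotations hk i).2 hg) hz
  · exact ⟨i, rfl⟩

/-- The tuples of elements commuting with `sr c` that are not made up of central rotations. -/
def reflectionTuples (k s : ℕ) (c : ZMod (2 * k)) : Finset (Fin s → DihedralGroup (2 * k)) :=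
  Fintype.piFinset (fun _ => reflectionCentralizer k c) \
    Fintype.piFinset (fun _ => centralRotations k)

theorem mem_reflectionTuples (hk : 0 < k) {s : ℕ} {c : ZMod (2 * k)}
    {t : Fin s → DihedralGroup (2 * k)} :
    t ∈ reflectionTuples k s c ↔ (∀ i, Commute (t i) (sr c)) ∧ ∃ i x, t i = sr x := by
  simp only [reflectionTuples, Finset.mem_sdiff, Fintype.mem_piFinset,
    mem_reflectionCentralizer hk, not_forall]
  refine and_congr_right fun h => exists_congr fun i => ⟨fun hz => ?_, ?_⟩
  · exact exists_sr_of_notMem_centralRotations hk (h i) hz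
  · rintro ⟨x, hx⟩
    rw [hx]
    exact sr_notMem_centralRotations x

theorem card_reflectionTuples (hk : 0 < k) (s : ℕ) (c : ZMod (2 * k)) :
    (reflectionTuples k s c).card = 4 ^ s - 2 ^ s := by
  rw [reflectionTuples, Finset.card_sdiff_of_subset
    (Fintype.piFinset_subset _ _ fun _ => centralRotations_subset c)]
  simp [card_centralRotations hk, card_reflectionCentralizer hk]

theorem pairwiseDisjoint_reflectionTuples (hk : 0 < k) (s : ℕ) :
    (Finset.range k : Set ℕ).PairwiseDisjoint fun c => reflectionTuples k s c := by
  intro c hc d hd hne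
  rw [Function.onFun, Finset.disjoint_left]
  intro t htc htd
  rw [mem_reflectionTuples hk] at htc htd
  obtain ⟨hc', i, x, hx⟩ := htc
  have h₁ := hc' i
  have h₂ := htd.1 i
  rw [hx, commute_sr_sr_iff] at h₁ h₂
  refine hne (ZMod.eq_of_two_mul_natCast_sub_eq_zero (by simpa using hc) (by simpa using hd) ?_)
  linear_combination h₂ - h₁

theorem commuting_tuple_iff [NeZero (2 * k)] (hk : 0 < k) {s : ℕ}
    (t : Fin s → DihedralGroup (2 * k)) :
    (∀ i j, Commute (t i) (t j)) ↔
      t ∈ Fintype.piFinset (fun _ => rotations (2 * k)) ∪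
        (Finset.range k).biUnion fun c => reflectionTuples k s c := by
  simp only [Finset.mem_union, Fintype.mem_piFinset, Finset.mem_biUnion, Finset.mem_range,
    mem_reflectionTuples hk]
  constructor
  · intro h
    by_cases hr : ∃ i x, t i = sr x
    · right
      obtain ⟨i, x, hx⟩ := hr
      obtain ⟨c, hc, hxc⟩ := ZMod.exists_lt_two_mul_sub_eq_zero hk x
      refine ⟨c, hc, fun j => ?_, i, x, hx⟩
      refine commute_of_commute_sr (hx ▸ h j i) ?_
      rw [commute_sr_sr_iff]
      linear_combination -hxc
    · left
      push Not at hr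
      intro i
      rcases hi : t i with x | x
      · exact r_mem_rotations x
      · exact absurd hi (hr i x)
  · rintro (h | ⟨c, -, h, -⟩) i j
    · have hi := h i
      have hj := h j
      rcases hx : t i with x | x <;> rw [hx] at hi
      · rcases hy : t j with y | y <;> rw [hy] at hj
        · exact commute_r_r x y
        · exact absurd hj (sr_notMem_rotations y)
      · exact absurd hi (sr_notMem_rotations x)
    · exact commute_of_commute_sr (h i) (h j)

theorem disjoint_rotations_reflectionTuples [NeZero (2 * k)] (hk : 0 < k) (s : ℕ) :
    Disjoint (Fintype.piFinset fun _ : Fin s => rotations (2 * k))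
      ((Finset.range k).biUnion fun c => reflectionTuples k s c) := by
  rw [Finset.disjoint_left]
  intro t ht
  simp only [Finset.mem_biUnion, mem_reflectionTuples hk]
  rintro ⟨c, -, -, i, x, hx⟩
  exact sr_notMem_rotations x (hx ▸ Fintype.mem_piFinset.1 ht i)

theorem card_commuting_tuples (hk : 0 < k) (s : ℕ) :
    Nat.card {t : Fin s → DihedralGroup (2 * k) // ∀ i j, Commute (t i) (t j)} =
      (2 * k) ^ s + k * (4 ^ s - 2 ^ s) := by
  have : NeZero (2 * k) := ⟨by omega⟩
  rw [Nat.subtype_card _ fun t => (commuting_tuple_iff hk t).symm,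
    Finset.card_union_of_disjoint (disjoint_rotations_reflectionTuples hk s),
    Finset.card_biUnion (pairwiseDisjoint_reflectionTuples hk s)]
  simp [card_rotations, card_reflectionTuples hk]

end EvenPolygon

end DihedralGroup

/-- Let `n = 2k` be even with `k ≥ 2`, and let `D_{2n}` be the dihedral
group of order `2n`.  Then for every `s ≥ 1` the number of commuting `s`-tuples in
`D_{2n}` is `n^s + k·4^s − k·2^s`. -/
theorem stmt_6 (n k : ℕ) (hn : n = 2 * k) (hk : 2 ≤ k) (s : ℕ) (hs : 1 ≤ s) :
    (Nat.card {t : Fin s → DihedralGroup n // ∀ i j, Commute (t i) (t j)} : ℤ)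
      = (n : ℤ) ^ s + (k : ℤ) * 4 ^ s - (k : ℤ) * 2 ^ s := by
  subst hn
  rw [DihedralGroup.card_commuting_tuples (by omega) s]
  have h : 2 ^ s ≤ 4 ^ s := Nat.pow_le_pow_left (by norm_num) s
  push_cast [Nat.cast_sub h]
  ring
end

section
/- Let n ≥ 1 and s ≥ 1 be integers. Then the number of commuting s-tuples in the symmetric group Σ_n satisfies |Hom(ℤ^s, Σ_n)| = Σ_{λ} ( n! / Π_{i=1}^n (i^{a_i} · a_i!) ) · Π_{i=1}^n j_i(ℤ^s)^{a_i}, where the sum runs over all partitions λ = 1^{a_1} 2^{a_2} ⋯ n^{a_n} of n (a_i being the number of parts of λ equal to i), and j_r(ℤ^s) denotes the number of subgroups of ℤ^s of index r. -/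
open Equiv

section GroupActions

variable {G : Type*} [Group G]

/-- The embedding `f` of `G ⧸ H` in `α` is equivariant for the action `φ` of `G` on `α`. -/
def IsEquivariantEmbedding {α : Type*} {H : Subgroup G} (f : (G ⧸ H) ↪ α) (φ : G →* Perm α) :
    Prop :=
  ∀ (g : G) (x : G ⧸ H), φ g (f x) = f (g • x)

/-- Actions on `β ⊕ γ` extending a given action on `β` correspond to actions on `γ`. -/
theorem card_extensions_sum {β γ : Type*} [Finite β] [Finite γ] (ρ : G →* Perm β) :
    Nat.card {φ : G →* Perm (β ⊕ γ) // ∀ g b, φ g (Sum.inl b) = Sum.inl (ρ g b)} =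
      Nat.card (G →* Perm γ) := by
  symm
  refine Nat.card_congr (Equiv.ofBijective
    (fun ψ ↦ ⟨(Perm.sumCongrHom β γ).comp (ρ.prod ψ), fun g b ↦ by simp⟩) ⟨?_, ?_⟩)
  · intro ψ₁ ψ₂ h
    ext g x
    have := congrArg (fun φ ↦ φ.1 g (Sum.inr x)) h
    simpa using this
  · rintro ⟨φ, hφ⟩
    have hrange (g : G) : ∃ τ : Perm γ, Perm.sumCongrHom β γ (ρ g, τ) = φ g := by
      have hmem : φ g ∈ (Perm.sumCongrHom β γ).range := by
        apply Perm.mem_sumCongrHom_range_of_perm_mapsTo_inl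
        rintro _ ⟨b, rfl⟩
        exact ⟨ρ g b, (hφ g b).symm⟩
      obtain ⟨⟨σ, τ⟩, h⟩ := hmem
      refine ⟨τ, ?_⟩
      have hσ : σ = ρ g := by
        ext b
        have := hφ g b
        rw [← h] at this
        simpa using this
      rw [← hσ, h]
    choose τ hτ using hrange
    have hmul (g₁ g₂ : G) : τ (g₁ * g₂) = τ g₁ * τ g₂ := by
      have : (ρ (g₁ * g₂), τ (g₁ * g₂)) = (ρ g₁, τ g₁) * (ρ g₂, τ g₂) := by
        apply Perm.sumCongrHom_injective
        rw [hτ, map_mul φ, map_mul (Perm.sumCongrHom β γ), hτ, hτ]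
      exact congrArg Prod.snd this
    refine ⟨MonoidHom.mk' τ hmul, Subtype.ext (MonoidHom.ext fun g ↦ ?_)⟩
    exact hτ g

theorem card_isEquivariantEmbedding {n k : ℕ} {H : Subgroup G} (hH : H.index = k)
    (f : (G ⧸ H) ↪ Fin n) :
    Nat.card {φ : G →* Perm (Fin n) // IsEquivariantEmbedding f φ} =
      Nat.card (G →* Perm (Fin (n - k))) := by
  classical
  have : Finite (G ⧸ H) := Finite.of_injective f f.injective
  have hcompl : Nat.card ((Set.range f)ᶜ : Set (Fin n)) = n - k := by
    rw [Nat.card_coe_set_eq, Set.ncard_compl, Nat.card_fin, ← Nat.card_coe_set_eq,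
      Nat.card_range_of_injective f.injective, ← hH, Subgroup.index]
  let e : (G ⧸ H) ⊕ Fin (n - k) ≃ Fin n :=
    ((Equiv.ofInjective f f.injective).sumCongr (Finite.equivFinOfCardEq hcompl).symm).trans
      (Equiv.Set.sumCompl (Set.range f))
  have he (x : G ⧸ H) : e (Sum.inl x) = f x := by simp [e]
  rw [← card_extensions_sum (γ := Fin (n - k)) (MulAction.toPermHom G (G ⧸ H))]
  refine Nat.card_congr (Equiv.subtypeEquiv
    (MulEquiv.monoidHomCongrRightEquiv e.symm.permCongrHom) ?_)
  intro φ
  refine forall_congr' fun g ↦ forall_congr' fun x ↦ ?_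
  simp [he, Equiv.symm_apply_eq]

/-- A pointed action is the same as an equivariantly embedded quotient together with the action. -/
theorem bijective_pointedAction (n : ℕ) :
    Function.Bijective
      (fun p : Σ k : Finset.Icc 1 n, Σ H : {H : Subgroup G // H.index = k},
          Σ f : (G ⧸ H.1) ↪ Fin n, {φ : G →* Perm (Fin n) // IsEquivariantEmbedding f φ} ↦
        ((p.2.2.2.1, p.2.2.1 (1 : G)) : (G →* Perm (Fin n)) × Fin n)) := by
  constructor
  · rintro ⟨⟨k, hk⟩, ⟨H, hH⟩, f, φ, hf⟩ ⟨⟨k', hk'⟩, ⟨H', hH'⟩, f', φ', hf'⟩ h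
    obtain ⟨rfl, hff⟩ := Prod.mk.inj h
    dsimp only at f f' hf hf' hff
    have hmk (g : G) : f g = f' g := by
      have h₁ := hf g (1 : G)
      have h₂ := hf' g (1 : G)
      rw [MulAction.Quotient.smul_coe, smul_eq_mul, mul_one] at h₁ h₂
      rw [← h₁, ← h₂, hff]
    have hHH : H = H' := by
      ext g
      have h₁ : f g = f (1 : G) ↔ f' g = f' (1 : G) := by rw [hmk, hmk]
      rw [f.injective.eq_iff, f'.injective.eq_iff, eq_comm, QuotientGroup.eq, eq_comm,
        QuotientGroup.eq] at h₁
      simpa using h₁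
    subst hHH
    have : f = f' := by
      ext x
      induction x using QuotientGroup.induction_on with
      | H g => rw [hmk g]
    subst this
    obtain rfl : k = k' := hH.symm.trans hH'
    rfl
  · rintro ⟨φ, a⟩
    let _ : MulAction G (Fin n) := MulAction.compHom (Fin n) φ
    let f : (G ⧸ MulAction.stabilizer G a) ↪ Fin n :=
      ⟨MulAction.ofQuotientStabilizer G a, MulAction.injective_ofQuotientStabilizer G a⟩
    have : Finite (G ⧸ MulAction.stabilizer G a) := Finite.of_injective f f.injective
    have hk : (MulAction.stabilizer G a).index ∈ Finset.Icc 1 n := by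
      rw [Finset.mem_Icc]
      refine ⟨Nat.card_pos, ?_⟩
      simpa [Subgroup.index] using Nat.card_le_card_of_injective f f.injective
    refine ⟨⟨⟨_, hk⟩, ⟨_, rfl⟩, f, φ, ?_⟩, ?_⟩
    · intro g x
      exact (MulAction.ofQuotientStabilizer_smul G a g x).symm
    · refine Prod.ext rfl ?_
      exact (MulAction.ofQuotientStabilizer_mk G a 1).trans (one_smul G a)

theorem finite_subgroups_of_index {k : ℕ} (hk : k ≠ 0) [Finite (G →* Perm (Fin k))] :
    Finite {H : Subgroup G // H.index = k} := by
  refine Set.Finite.subset (Set.finite_range fun p : (G →* Perm (Fin k)) × Fin k ↦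
    (MulAction.stabilizer (Perm (Fin k)) p.2).comap p.1) ?_
  intro H hH
  have hH : Nat.card (G ⧸ H) = k := hH
  have : Finite (G ⧸ H) := Nat.finite_of_card_ne_zero (hH ▸ hk)
  let e := Finite.equivFinOfCardEq hH
  refine ⟨(e.permCongrHom.toMonoidHom.comp (MulAction.toPermHom G (G ⧸ H)), e (1 : G)), ?_⟩
  ext g
  simp only [Subgroup.mem_comap, MulAction.mem_stabilizer_iff, Perm.smul_def, MonoidHom.comp_apply]
  have : (e.permCongrHom.toMonoidHom (MulAction.toPermHom G (G ⧸ H) g)) (e (1 : G)) =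
      e (g : G) := by simp
  rw [this, e.injective.eq_iff, eq_comm, QuotientGroup.eq]
  simp

/-- Counting actions with a marked point by the stabilizer and the orbit of the point. -/
theorem mul_card_hom_perm [∀ n, Finite (G →* Perm (Fin n))] (n : ℕ) :
    n * Nat.card (G →* Perm (Fin n)) =
      ∑ k ∈ Finset.Icc 1 n, Nat.card {H : Subgroup G // H.index = k} *
        (n.descFactorial k * Nat.card (G →* Perm (Fin (n - k)))) := by
  have hfin (k : Finset.Icc 1 n) : Finite {H : Subgroup G // H.index = k} :=
    finite_subgroups_of_index (by have := Finset.mem_Icc.1 k.2; omega)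
  have hcard := Nat.card_congr (Equiv.ofBijective _ (bijective_pointedAction (G := G) n))
  have hquot (k : Finset.Icc 1 n) (H : {H : Subgroup G // H.index = k}) : Finite (G ⧸ H.1) :=
    Nat.finite_of_card_ne_zero (by
      have h₁ : Nat.card (G ⧸ H.1) = k := H.2
      have := Finset.mem_Icc.1 k.2
      omega)
  rw [Nat.card_prod, Nat.card_fin, mul_comm] at hcard
  rw [← hcard, Nat.card_sigma, ← Finset.sum_coe_sort (Finset.Icc 1 n)]
  refine Finset.sum_congr rfl fun k _ ↦ ?_
  have := Fintype.ofFinite {H : Subgroup G // H.index = k}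
  rw [Nat.card_sigma, Nat.card_eq_fintype_card, ← Finset.card_univ, ← smul_eq_mul]
  refine Finset.sum_eq_card_nsmul fun H _ ↦ ?_
  have := Fintype.ofFinite (G ⧸ H.1)
  have := Fintype.ofFinite ((G ⧸ H.1) ↪ Fin n)
  rw [Nat.card_sigma, Finset.sum_congr rfl fun f _ ↦ card_isEquivariantEmbedding H.2 f,
    Finset.sum_const, Finset.card_univ, Fintype.card_embedding_eq, Fintype.card_fin,
    ← Nat.card_eq_fintype_card, smul_eq_mul]
  congr 2
  exact H.2

end GroupActions

section Partitions

variable {K : Type*} [Field K] [CharZero K]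

/-- The coefficient of a monomial in `exp (∑ i, c i * X ^ i)`. -/
def expWeight (c : ℕ → K) (m : Multiset ℕ) : K :=
  ∏ i ∈ m.toFinset, c i ^ m.count i / ((m.count i).factorial : K)

theorem expWeight_eq_prod (c : ℕ → K) {m : Multiset ℕ} {S : Finset ℕ} (h : m.toFinset ⊆ S) :
    expWeight c m = ∏ i ∈ S, c i ^ m.count i / ((m.count i).factorial : K) := by
  refine Finset.prod_subset h fun i _ hi ↦ ?_
  rw [Multiset.count_eq_zero_of_notMem (by simpa using hi)]
  simp

theorem count_mul_expWeight_cons (c : ℕ → K) (k : ℕ) (m : Multiset ℕ) :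
    ((k ::ₘ m).count k : K) * expWeight c (k ::ₘ m) = c k * expWeight c m := by
  have hk : k ∈ insert k m.toFinset := Finset.mem_insert_self _ _
  rw [expWeight_eq_prod c (S := insert k m.toFinset) (by simp),
    expWeight_eq_prod c (m := m) (Finset.subset_insert k _),
    ← Finset.mul_prod_erase _ _ hk, ← Finset.mul_prod_erase _ _ hk,
    Finset.prod_congr rfl (g := fun i ↦ c i ^ m.count i / ((m.count i).factorial : K))
      (s₁ := (insert k m.toFinset).erase k) fun i hi ↦ by
        rw [Multiset.count_cons_of_ne (Finset.ne_of_mem_erase hi)],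
    Multiset.count_cons_self, Nat.factorial_succ, pow_succ]
  have h₁ : ((m.count k + 1 : ℕ) : K) ≠ 0 := Nat.cast_ne_zero.2 (Nat.succ_ne_zero _)
  have h₂ : ((m.count k).factorial : K) ≠ 0 := Nat.cast_ne_zero.2 (Nat.factorial_ne_zero _)
  push_cast at h₁ ⊢
  field_simp

theorem Nat.Partition.sum_count_mul {n : ℕ} (p : n.Partition) :
    ∑ k ∈ Finset.Icc 1 n, p.parts.count k * k = n := by
  conv_rhs => rw [← p.parts_sum, Finset.sum_multiset_count]
  symm
  refine Finset.sum_subset (fun i hi ↦ ?_) fun i _ hi ↦ ?_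
  · rw [Multiset.mem_toFinset] at hi
    exact Finset.mem_Icc.2 ⟨p.parts_pos hi, p.le_of_mem_parts hi⟩
  · rw [Multiset.count_eq_zero_of_notMem (by simpa using hi), zero_smul]

theorem sum_count_mul_expWeight (c : ℕ → K) {n k : ℕ} (hk : 1 ≤ k) (hkn : k ≤ n) :
    ∑ p : n.Partition, (p.parts.count k : K) * expWeight c p.parts =
      c k * ∑ p : (n - k).Partition, expWeight c p.parts := by
  classical
  rw [← Finset.sum_subset (Finset.subset_univ {p : n.Partition | k ∈ p.parts}) fun p _ hp ↦ by
      rw [Multiset.count_eq_zero_of_notMem (by simpa using hp)]; simp,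
    Finset.sum_subtype (p := fun p : n.Partition ↦ k ∈ p.parts) _ (by simp), Finset.mul_sum,
    ← (Nat.Partition.partitionWithPartEquiv hk hkn).symm.sum_comp]
  refine Finset.sum_congr rfl fun p _ ↦ ?_
  rw [Nat.Partition.partitionWithPartEquiv_symm_apply_parts, count_mul_expWeight_cons]

theorem mul_sum_expWeight (c : ℕ → K) (n : ℕ) :
    (n : K) * ∑ p : n.Partition, expWeight c p.parts =
      ∑ k ∈ Finset.Icc 1 n, k * c k * ∑ p : (n - k).Partition, expWeight c p.parts := by
  calc (n : K) * ∑ p : n.Partition, expWeight c p.parts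
      = ∑ p : n.Partition, ∑ k ∈ Finset.Icc 1 n,
          (k : K) * ((p.parts.count k : K) * expWeight c p.parts) := by
        rw [Finset.mul_sum]
        refine Finset.sum_congr rfl fun p _ ↦ ?_
        have h := congrArg (Nat.cast (R := K)) p.sum_count_mul
        push_cast at h
        rw [← h, Finset.sum_mul]
        exact Finset.sum_congr rfl fun k _ ↦ by ring
    _ = _ := by
        rw [Finset.sum_comm]
        refine Finset.sum_congr rfl fun k hk ↦ ?_
        rw [Finset.mem_Icc] at hk
        rw [← Finset.mul_sum, sum_count_mul_expWeight c hk.1 hk.2, mul_assoc]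

end Partitions

/-- The exponential formula for the number of actions of `G` on a set with `n` elements. -/
theorem card_hom_perm_div_factorial {G : Type*} [Group G] [∀ n, Finite (G →* Perm (Fin n))]
    (n : ℕ) :
    (Nat.card (G →* Perm (Fin n)) : ℚ) / n.factorial =
      ∑ p : n.Partition,
        expWeight (fun i ↦ (Nat.card {H : Subgroup G // H.index = i} : ℚ) / i) p.parts := by
  induction n using Nat.strong_induction_on with
  | _ n ih =>
    rcases Nat.eq_zero_or_pos n with rfl | hn
    · have : Subsingleton (G →* Perm (Fin 0)) := ⟨fun _ _ ↦ by ext _ x; exact x.elim0⟩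
      simp [expWeight]
    · have hn' : (n : ℚ) ≠ 0 := by positivity
      refine mul_left_cancel₀ hn' ?_
      rw [mul_sum_expWeight, ← mul_div_assoc]
      have h := congrArg (Nat.cast (R := ℚ)) (mul_card_hom_perm (G := G) n)
      push_cast at h
      rw [h, Finset.sum_div]
      refine Finset.sum_congr rfl fun k hk ↦ ?_
      rw [Finset.mem_Icc] at hk
      rw [← ih (n - k) (by omega)]
      have hfac : ((n - k).factorial : ℚ) * n.descFactorial k = n.factorial := by
        exact_mod_cast Nat.factorial_mul_descFactorial hk.2
      have h₁ : (k : ℚ) ≠ 0 := by have := hk.1; positivity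
      have h₂ : ((n - k).factorial : ℚ) ≠ 0 := by positivity
      have h₃ : (n.descFactorial k : ℚ) ≠ 0 := by
        intro h0
        rw [h0, mul_zero] at hfac
        exact Nat.cast_ne_zero.2 n.factorial_ne_zero hfac.symm
      rw [← hfac]
      field_simp

/-- Homomorphisms from `ℤ ^ s` are commuting `s`-tuples. -/
noncomputable def commutingTuplesEquiv (s : ℕ) (M : Type*) [Group M] :
    {t : Fin s → M // ∀ i j, Commute (t i) (t j)} ≃ (Multiplicative (Fin s → ℤ) →* M) :=
  ((Equiv.subtypeEquiv (Equiv.piCongrRight fun _ ↦ zpowersHom M) fun t ↦ by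
      refine ⟨fun h i j _ x y ↦ ?_, fun h i j ↦ ?_⟩
      · simpa using (h i j).zpow_zpow _ _
      · by_cases hij : i = j
        · rw [hij]
        · simpa using h hij (Multiplicative.ofAdd 1) (Multiplicative.ofAdd 1)).trans
    (MonoidHom.noncommPiCoprodEquiv (N := fun _ : Fin s ↦ Multiplicative ℤ))).trans
    (MulEquiv.monoidHomCongrLeftEquiv (MulEquiv.piMultiplicative fun _ : Fin s ↦ ℤ).symm)

/-- For `n, s ≥ 1`, the number of commuting `s`-tuples in the symmetric
group `Σ_n` is `∑_λ (n!/∏_{i=1}^n i^{a_i}·a_i!) · ∏_{i=1}^n j_i(ℤ^s)^{a_i}`, the sum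
running over all partitions `λ = 1^{a_1}⋯n^{a_n}` of `n` (`a_i` the multiplicity of the
part `i`), where `j_r(ℤ^s)` is the number of subgroups of `ℤ^s` of index `r`. -/
theorem stmt_9 (n s : ℕ) (hn : 1 ≤ n) (hs : 1 ≤ s)
    (j : ℕ → ℕ)
    (hj : ∀ r : ℕ, j r = Nat.card {H : AddSubgroup (Fin s → ℤ) // H.index = r}) :
    (Nat.card {t : Fin s → Equiv.Perm (Fin n) // ∀ i j, Commute (t i) (t j)} : ℚ)
      = ∑ lam : Nat.Partition n,
          ((n.factorial : ℚ) /
              ∏ i ∈ Finset.Icc 1 n,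
                ((i : ℚ) ^ (lam.parts.count i) * ((lam.parts.count i).factorial : ℚ)))
            * ∏ i ∈ Finset.Icc 1 n, (j i : ℚ) ^ (lam.parts.count i) := by
  let G := Multiplicative (Fin s → ℤ)
  have (m : ℕ) : Finite (G →* Perm (Fin m)) :=
    Finite.of_equiv _ (commutingTuplesEquiv s (Perm (Fin m)))
  have hjG (r : ℕ) : j r = Nat.card {H : Subgroup G // H.index = r} := by
    rw [hj]
    exact Nat.card_congr (Equiv.subtypeEquiv AddSubgroup.toSubgroup.toEquiv fun H ↦ by
      rw [← AddSubgroup.index_toSubgroup]; rfl)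
  have hcard := card_hom_perm_div_factorial (G := G) n
  have hfac : (n.factorial : ℚ) ≠ 0 := by positivity
  rw [Nat.card_congr (commutingTuplesEquiv s (Perm (Fin n))), (div_eq_iff hfac).1 hcard,
    Finset.sum_mul]
  refine Finset.sum_congr rfl fun p _ ↦ ?_
  have hsub : p.parts.toFinset ⊆ Finset.Icc 1 n := fun i hi ↦ by
    rw [Multiset.mem_toFinset] at hi
    exact Finset.mem_Icc.2 ⟨p.parts_pos hi, p.le_of_mem_parts hi⟩
  rw [expWeight_eq_prod _ hsub, mul_comm, div_mul_eq_mul_div, mul_div_assoc,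
    ← Finset.prod_div_distrib]
  congr 1
  refine Finset.prod_congr rfl fun i _ ↦ ?_
  rw [hjG, div_pow, div_div]
end

section
/- Let K be a finitely generated group and G a finite group. Then |Hom(K × ℤ, G)| = |G| · |Hom(K, G)/G|, where Hom(K × ℤ, G) is the (finite) set of group homomorphisms from K × ℤ to G, and Hom(K, G)/G is the set of orbits of the conjugation action of G on the set of homomorphisms from K to G (g · φ is the homomorphism k ↦ g φ(k) g⁻¹). -/
/-- The conjugation action of a group `G` on the homomorphisms `K →* G`. -/
abbrev MonoidHom.conjMulAction (K G : Type*) [Group K] [Group G] : MulAction G (K →* G) where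
  smul g φ := (MulAut.conj g).toMonoidHom.comp φ
  one_smul φ := MonoidHom.ext fun x => by
    change MulAut.conj 1 (φ x) = φ x
    simp
  mul_smul g h φ := MonoidHom.ext fun x => by
    change MulAut.conj (g * h) (φ x) = MulAut.conj g (MulAut.conj h (φ x))
    simp

attribute [local instance] MonoidHom.conjMulAction

theorem MonoidHom.conj_smul_apply {K G : Type*} [Group K] [Group G] (g : G) (φ : K →* G)
    (x : K) : (g • φ) x = g * φ x * g⁻¹ :=
  rfl

theorem MonoidHom.mem_fixedBy_conj_iff {K G : Type*} [Group K] [Group G] {g : G} {φ : K →* G} :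
    φ ∈ MulAction.fixedBy (K →* G) g ↔ ∀ x, Commute g (φ x) := by
  simp only [MulAction.mem_fixedBy, MonoidHom.ext_iff, MonoidHom.conj_smul_apply,
    mul_inv_eq_iff_eq_mul, Commute, SemiconjBy]

/-- A homomorphism out of `K × ℤ` amounts to an element `g`, the image of the generator of `ℤ`,
together with a homomorphism out of `K` fixed under conjugation by `g`. -/
def MonoidHom.prodIntEquivSigmaFixedBy (K G : Type*) [Group K] [Group G] :
    ((K × Multiplicative ℤ) →* G) ≃ Σ g : G, MulAction.fixedBy (K →* G) g where
  toFun f := ⟨f (1, Multiplicative.ofAdd 1), f.comp (MonoidHom.inl K (Multiplicative ℤ)),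
    MonoidHom.mem_fixedBy_conj_iff.2 fun x => by
      simp [Commute, SemiconjBy, ← map_mul]⟩
  invFun p := p.2.1.noncommCoprod (zpowersHom G p.1) fun x n => by
    rw [zpowersHom_apply]
    exact ((MonoidHom.mem_fixedBy_conj_iff.1 p.2.2 x).zpow_left n.toAdd).symm
  left_inv f := by
    refine MonoidHom.ext fun ⟨x, n⟩ => ?_
    simp [← map_zpow, ← map_mul, ← ofAdd_zsmul]
  right_inv := by
    rintro ⟨g, φ, hφ⟩
    refine Sigma.subtype_ext ?_ ?_
    · simp
    · ext
      simp

/-- The orbits of the conjugation action, as a quotient by the explicit conjugacy relation. -/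
def MonoidHom.conjOrbitsEquiv (K G : Type*) [Group K] [Group G] :
    Quotient (MulAction.orbitRel G (K →* G)) ≃
      Quot (fun φ ψ : K →* G => ∃ g : G, ∀ x : K, ψ x = g * φ x * g⁻¹) :=
  Quot.congrRight fun φ ψ => by
    rw [Setoid.comm', MulAction.orbitRel_apply, MulAction.mem_orbit_iff]
    simp only [MonoidHom.ext_iff, MonoidHom.conj_smul_apply, eq_comm]

/-- Let `K` be a finitely generated group and `G` a finite group.
Then `|Hom(K × ℤ, G)| = |G| · |Hom(K, G)/G|`, where `Hom(K, G)/G` is the set of orbits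
of the conjugation action of `G` on `Hom(K, G)`. -/
theorem stmt_10 (K G : Type*) [Group K] [Group.FG K] [Group G] [Finite G] :
    Nat.card ((K × Multiplicative ℤ) →* G)
      = Nat.card G *
        Nat.card (Quot (fun φ ψ : K →* G => ∃ g : G, ∀ x : K, ψ x = g * φ x * g⁻¹)) := by
  rw [Nat.card_congr ((MonoidHom.prodIntEquivSigmaFixedBy K G).trans
      (MulAction.sigmaFixedByEquivOrbitsProdGroup G (K →* G))),
    Nat.card_prod, mul_comm, Nat.card_congr (MonoidHom.conjOrbitsEquiv K G)]
end

section
/- Let G be a finite group, H ≤ G a subgroup, and n ≥ 1 an integer. Then |Hom(ℤ^n, G)| · |H|^n ≤ |Hom(ℤ^n, H)| · |G|^n and |Hom(ℤ^n, H)| ≤ |G:H|^n · |Hom(ℤ^n, G)| (equivalently, |G:H|^{−2n} P_2(H,n) ≤ P_2(G,n) ≤ P_2(H,n), where P_2(G,n) = |Hom(ℤ^n,G)|/|G|^n). -/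
open Function in
/-- Requiring one more coordinate of a commuting tuple to lie in `H` shrinks the number of tuples
by a factor of at most `|G| / |H|`. -/
theorem card_commuting_mul_card_le {G ι : Type*} [Group G] [Finite G] [Finite ι] [DecidableEq ι]
    (H : Subgroup G) (s : Finset ι) (a : ι) :
    Nat.card {t : ι → G // (∀ i j, Commute (t i) (t j)) ∧ ∀ i ∈ s, t i ∈ H} * Nat.card H
      ≤ Nat.card {t : ι → G // (∀ i j, Commute (t i) (t j)) ∧ ∀ i ∈ insert a s, t i ∈ H}
        * Nat.card G := by
  -- `c C g` is the first factor of a chosen decomposition of `g ∈ C * H`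
  have hdecomp : ∀ (C : Subgroup G) (g : G), ∃ c : G,
      (∃ x ∈ C, x⁻¹ * g ∈ H) → c ∈ C ∧ c⁻¹ * g ∈ H := by
    intro C g
    by_cases h : ∃ x ∈ C, x⁻¹ * g ∈ H
    · exact h.imp fun _ hx _ => hx
    · exact ⟨1, fun h' => absurd h' h⟩
  choose c hc using hdecomp
  let C : (ι → G) → Subgroup G := fun t => Subgroup.centralizer (t '' {a}ᶜ)
  have mem_C {t : ι → G} {x : G} : x ∈ C t ↔ ∀ j, j ≠ a → Commute (t j) x := by
    simp [C, Subgroup.mem_centralizer_iff, Commute, SemiconjBy]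
  have C_update (t : ι → G) (x : G) : C (update t a x) = C t := by
    ext y
    rw [mem_C, mem_C]
    exact forall₂_congr fun j hj => by rw [update_of_ne hj]
  have key (t : ι → G) (ht : ∀ i j, Commute (t i) (t j)) (h : H) :
      c (C t) (t a * h) ∈ C t ∧ (c (C t) (t a * h))⁻¹ * (t a * h) ∈ H :=
    hc _ _ ⟨t a, mem_C.2 fun j _ => ht j a, by simp⟩
  rw [← Nat.card_prod, ← Nat.card_prod]
  refine Nat.card_le_card_of_injective
    (fun p => (⟨update p.1.1 a ((c (C p.1.1) (p.1.1 a * p.2))⁻¹ * p.1.1 a), ?_, ?_⟩,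
      p.1.1 a * p.2)) ?_
  · obtain ⟨⟨t, ht, hs⟩, h⟩ := p
    have hd := mem_C.1 (mul_mem (inv_mem (key t ht h).1) (mem_C.2 fun j _ => ht j a))
    intro i j
    by_cases hi : i = a <;> by_cases hj : j = a
    · subst hi hj
      exact Commute.refl _
    · subst hi
      simpa [update_of_ne hj] using (hd j hj).symm
    · subst hj
      simpa [update_of_ne hi] using hd i hi
    · simpa [update_of_ne hi, update_of_ne hj] using ht i j
  · obtain ⟨⟨t, ht, hs⟩, h⟩ := p
    intro i hi
    by_cases hia : i = a
    · subst hia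
      have := mul_mem (key t ht h).2 (inv_mem h.2)
      simpa [mul_assoc] using this
    · simpa [update_of_ne hia] using hs i (Finset.mem_of_mem_insert_of_ne hi hia)
  · rintro ⟨⟨t, ht, hs⟩, h⟩ ⟨⟨t', ht', hs'⟩, h'⟩ heq
    simp only [Prod.mk.injEq, Subtype.mk.injEq] at heq
    obtain ⟨hu, hg⟩ := heq
    have hC : C t = C t' := by
      have := congrArg C hu
      rwa [C_update, C_update] at this
    have hta : t a = t' a := by
      have := congrFun hu a
      rw [update_self, update_self, hC, hg] at this
      exact mul_left_cancel this
    have htt : t = t' := by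
      funext j
      by_cases hj : j = a
      · rw [hj, hta]
      · have := congrFun hu j
        rwa [update_of_ne hj, update_of_ne hj] at this
    subst htt
    simpa using hg

theorem card_commuting_mul_card_pow_le {G ι : Type*} [Group G] [Finite G] [Finite ι]
    (H : Subgroup G) (s : Finset ι) :
    Nat.card {t : ι → G // ∀ i j, Commute (t i) (t j)} * Nat.card H ^ s.card
      ≤ Nat.card {t : ι → G // (∀ i j, Commute (t i) (t j)) ∧ ∀ i ∈ s, t i ∈ H}
        * Nat.card G ^ s.card := by
  classical
  induction s using Finset.induction_on with
  | empty => simp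
  | insert a s ha ih =>
    rw [Finset.card_insert_of_notMem ha, pow_succ, pow_succ, ← mul_assoc]
    calc _ ≤ _ := Nat.mul_le_mul_right _ ih
      _ = _ := mul_right_comm _ _ _
      _ ≤ _ := Nat.mul_le_mul_right _ (card_commuting_mul_card_le H s a)
      _ = _ := by ring

/-- Commuting tuples in `H` are the commuting tuples in `G` with all entries in `H`. -/
def commutingTuplesSubgroupEquiv {G ι : Type*} [Group G] (H : Subgroup G) :
    {t : ι → H // ∀ i j, Commute (t i) (t j)} ≃
      {t : ι → G // (∀ i j, Commute (t i) (t j)) ∧ ∀ i, t i ∈ H} where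
  toFun t := ⟨fun i => t.1 i, fun i j => (t.2 i j).map H.subtype, fun i => (t.1 i).2⟩
  invFun t := ⟨fun i => ⟨t.1 i, t.2.2 i⟩, fun i j => Subtype.ext (t.2.1 i j)⟩
  left_inv _ := rfl
  right_inv _ := rfl

/-- Let `G` be a finite group, `H ≤ G`, and `n ≥ 1`.  Then
`|Hom(ℤ^n, G)|·|H|^n ≤ |Hom(ℤ^n, H)|·|G|^n` and
`|Hom(ℤ^n, H)| ≤ |G:H|^n·|Hom(ℤ^n, G)|`; equivalently
`|G:H|^{-2n}·P_2(H,n) ≤ P_2(G,n) ≤ P_2(H,n)` where `P_2(G,n) = |Hom(ℤ^n,G)|/|G|^n`. -/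
theorem stmt_12 {G : Type*} [Group G] [Fintype G] (H : Subgroup G) (n : ℕ) (hn : 1 ≤ n) :
    Nat.card {t : Fin n → G // ∀ i j, Commute (t i) (t j)} * (Nat.card (↥H)) ^ n
        ≤ Nat.card {t : Fin n → ↥H // ∀ i j, Commute (t i) (t j)} * (Nat.card G) ^ n
      ∧ Nat.card {t : Fin n → ↥H // ∀ i j, Commute (t i) (t j)}
        ≤ H.index ^ n * Nat.card {t : Fin n → G // ∀ i j, Commute (t i) (t j)} := by
  rw [Nat.card_congr (commutingTuplesSubgroupEquiv H)]
  constructor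
  · simpa using card_commuting_mul_card_pow_le H (Finset.univ : Finset (Fin n))
  · calc _ ≤ Nat.card {t : Fin n → G // ∀ i j, Commute (t i) (t j)} :=
          Nat.card_le_card_of_injective (Subtype.map id fun _ ht => ht.1)
            (Subtype.map_injective _ Function.injective_id)
      _ ≤ _ := Nat.le_mul_of_pos_left _ (pow_pos (Nat.pos_of_ne_zero H.index_ne_zero_of_finite) n)
end

section
/- Let G be a finite group, H ≤ G a subgroup, and n ≥ 1 an integer. Then k_n(H) ≤ |G:H| · k_n(G) and k_n(G) ≤ |G:H|^n · k_n(H), where k_n(G) is the number of conjugacy classes of commuting n-tuples in G. -/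
/-- Simultaneous conjugation of commuting tuples. -/
abbrev commutingTupleConjAction (G : Type*) [Group G] (n : ℕ) :
    MulAction G {f : Fin n → G // ∀ i j, Commute (f i) (f j)} where
  smul g t := ⟨fun i => g * t.1 i * g⁻¹, fun i j => (SemiconjBy.conj_iff).2 (t.2 i j)⟩
  one_smul t := Subtype.ext (funext fun i => show 1 * t.1 i * 1⁻¹ = t.1 i by simp)
  mul_smul g h t := Subtype.ext (funext fun i =>
    show g * h * t.1 i * (g * h)⁻¹ = g * (h * t.1 i * h⁻¹) * g⁻¹ by group)

/-- An element together with a commuting tuple it fixes under conjugation is a longer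
commuting tuple. -/
def sigmaFixedByEquivCommutingTuple (G : Type*) [Group G] (n : ℕ) :
    letI := commutingTupleConjAction G n
    (Σ g : G, MulAction.fixedBy {f : Fin n → G // ∀ i j, Commute (f i) (f j)} g) ≃
      {f : Fin (n + 1) → G // ∀ i j, Commute (f i) (f j)} :=
  letI := commutingTupleConjAction G n
  have fixed_iff (g : G) (t : {f : Fin n → G // ∀ i j, Commute (f i) (f j)}) :
      t ∈ MulAction.fixedBy {f : Fin n → G // ∀ i j, Commute (f i) (f j)} g ↔
        ∀ i, Commute g (t.1 i) := by
    rw [MulAction.mem_fixedBy, Subtype.ext_iff, funext_iff]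
    exact forall_congr' fun i => mul_inv_eq_iff_eq_mul
  { toFun := fun x => ⟨Fin.cons x.1 x.2.1.1, by
      have h := (fixed_iff _ _).1 x.2.2
      refine Fin.cases (Fin.cases (Commute.refl _) h) fun i => ?_
      exact Fin.cases (h i).symm (x.2.1.2 i)⟩
    invFun := fun f => ⟨f.1 0, ⟨Fin.tail f.1, fun i j => f.2 i.succ j.succ⟩,
      (fixed_iff _ _).2 fun i => f.2 0 i.succ⟩
    left_inv := fun _ => rfl
    right_inv := fun f => Subtype.ext (Fin.cons_self_tail f.1) }

/-- Burnside's lemma for simultaneous conjugation of commuting tuples. -/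
theorem card_commutingTuple_succ (G : Type*) [Group G] (n : ℕ) :
    Nat.card {f : Fin (n + 1) → G // ∀ i j, Commute (f i) (f j)} =
      Nat.card (Quot (fun t t' : {f : Fin n → G // ∀ i j, Commute (f i) (f j)} =>
        ∃ g : G, ∀ i, (t' : Fin n → G) i = g * (t : Fin n → G) i * g⁻¹)) * Nat.card G := by
  let := commutingTupleConjAction G n
  rw [← Nat.card_congr (sigmaFixedByEquivCommutingTuple G n),
    Nat.card_congr (MulAction.sigmaFixedByEquivOrbitsProdGroup G _), Nat.card_prod]
  congr 1
  refine Nat.card_congr (Quot.congrRight fun t t' => ?_)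
  refine (MulAction.orbitRel G _).comm'.trans ?_
  refine exists_congr fun g => ?_
  rw [Subtype.ext_iff, funext_iff]
  exact forall_congr' fun i => eq_comm

/-- Requiring one more coordinate of a commuting tuple to lie in `H` divides the number of
such tuples by at most the index of `H`. -/
theorem card_commutingTuple_le_index_mul_insert {G ι : Type*} [Group G] [Finite G] [Finite ι]
    [DecidableEq ι] (H : Subgroup G) (s : Finset ι) (a : ι) :
    Nat.card {f : ι → G // (∀ i j, Commute (f i) (f j)) ∧ ∀ i ∈ s, f i ∈ H} ≤
      H.index *
        Nat.card {f : ι → G // (∀ i j, Commute (f i) (f j)) ∧ ∀ i ∈ insert a s, f i ∈ H} := by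
  classical
  let P (p : ι → G) (q : G ⧸ H) (g : G) : Prop := (g : G ⧸ H) = q ∧ ∀ j, Commute g (p j)
  let r (p : ι → G) (q : G ⧸ H) : G := Classical.epsilon (P p q)
  have hr (f : ι → G) (hf : ∀ i j, Commute (f i) (f j)) :
      P (Function.update f a 1) (f a) (r (Function.update f a 1) (f a)) := by
    refine Classical.epsilon_spec (p := P (Function.update f a 1) (f a)) ⟨f a, rfl, fun j => ?_⟩
    rcases eq_or_ne j a with rfl | hj
    · simp
    · simpa [hj] using hf a j
  rw [Subgroup.index, ← Nat.card_prod]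
  let F : {f : ι → G // (∀ i j, Commute (f i) (f j)) ∧ ∀ i ∈ s, f i ∈ H} →
      (G ⧸ H) ×
        {f : ι → G // (∀ i j, Commute (f i) (f j)) ∧ ∀ i ∈ insert a s, f i ∈ H} := fun f =>
    (f.1 a, ⟨Function.update f.1 a ((r (Function.update f.1 a 1) (f.1 a))⁻¹ * f.1 a), by
      obtain ⟨hq, hc⟩ := hr f.1 f.2.1
      have hcomm (j : ι) (hj : j ≠ a) :
          Commute ((r (Function.update f.1 a 1) (f.1 a))⁻¹ * f.1 a) (f.1 j) := by
        have := hc j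
        rw [Function.update_of_ne hj] at this
        exact this.inv_left.mul_left (f.2.1 a j)
      constructor
      · intro i j
        rcases eq_or_ne i a with rfl | hi <;> rcases eq_or_ne j i with rfl | hj
        · exact Commute.refl _
        · simpa [hj] using hcomm j hj
        · exact Commute.refl _
        · rcases eq_or_ne j a with rfl | hja
          · simpa [hi] using (hcomm i hi).symm
          · simpa [hi, hja] using f.2.1 i j
      · intro i hi
        rcases eq_or_ne i a with rfl | hia
        · simpa using QuotientGroup.eq.1 hq
        · simpa [hia] using f.2.2 i (Finset.mem_of_mem_insert_of_ne hi hia)⟩)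
  refine Nat.card_le_card_of_injective F fun f f' h => ?_
  obtain ⟨hq, hu⟩ := Prod.ext_iff.1 h
  replace hq : (f.1 a : G ⧸ H) = f'.1 a := hq
  replace hu := congrArg Subtype.val hu
  dsimp only [F] at hu
  have hp : Function.update f.1 a 1 = Function.update f'.1 a 1 := by
    simpa using congrArg (fun u => Function.update u a (1 : G)) hu
  have ha := congrFun hu a
  rw [hp, hq] at ha
  simp only [Function.update_self, mul_right_inj] at ha
  refine Subtype.ext (funext fun i => ?_)
  rcases eq_or_ne i a with rfl | hi
  · exact ha
  · simpa [hi] using congrFun hp i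

theorem card_commutingTuple_le_index_pow_mul {G ι : Type*} [Group G] [Finite G] [Finite ι]
    (H : Subgroup G) (s : Finset ι) :
    Nat.card {f : ι → G // ∀ i j, Commute (f i) (f j)} ≤ H.index ^ s.card *
      Nat.card {f : ι → G // (∀ i j, Commute (f i) (f j)) ∧ ∀ i ∈ s, f i ∈ H} := by
  classical
  induction s using Finset.induction_on with
  | empty => simp
  | insert a s ha ih =>
    rw [Finset.card_insert_of_notMem ha, pow_succ, mul_assoc]
    exact ih.trans (Nat.mul_le_mul_left _ (card_commutingTuple_le_index_mul_insert H s a))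

/-- Commuting tuples in a subgroup are the commuting tuples of the group with all entries in
the subgroup. -/
def commutingTupleSubgroupEquiv {G ι : Type*} [Group G] [Fintype ι] (H : Subgroup G) :
    {f : ι → H // ∀ i j, Commute (f i) (f j)} ≃
      {f : ι → G // (∀ i j, Commute (f i) (f j)) ∧ ∀ i ∈ Finset.univ, f i ∈ H} where
  toFun f := ⟨fun i => f.1 i, fun i j => (f.2 i j).map H.subtype, fun i _ => (f.1 i).2⟩
  invFun f := ⟨fun i => ⟨f.1 i, f.2.2 i (Finset.mem_univ i)⟩,
    fun i j => Subtype.ext (f.2.1 i j)⟩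
  left_inv _ := rfl
  right_inv _ := rfl

/-- Let `G` be a finite group, `H ≤ G`, and `n ≥ 1`.  Then
`k_n(H) ≤ |G:H|·k_n(G)` and `k_n(G) ≤ |G:H|^n·k_n(H)`, where `k_n(G)` denotes the
number of conjugacy classes of commuting `n`-tuples in `G`. -/
theorem stmt_13 {G : Type*} [Group G] [Fintype G] (H : Subgroup G) (n : ℕ) (hn : 1 ≤ n) :
    Nat.card (Quot (fun t t' : {f : Fin n → ↥H // ∀ i j, Commute (f i) (f j)} =>
        ∃ h : ↥H, ∀ i, (t' : Fin n → ↥H) i = h * (t : Fin n → ↥H) i * h⁻¹))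
      ≤ H.index *
        Nat.card (Quot (fun t t' : {f : Fin n → G // ∀ i j, Commute (f i) (f j)} =>
          ∃ g : G, ∀ i, (t' : Fin n → G) i = g * (t : Fin n → G) i * g⁻¹))
    ∧ Nat.card (Quot (fun t t' : {f : Fin n → G // ∀ i j, Commute (f i) (f j)} =>
        ∃ g : G, ∀ i, (t' : Fin n → G) i = g * (t : Fin n → G) i * g⁻¹))
      ≤ H.index ^ n *
        Nat.card (Quot (fun t t' : {f : Fin n → ↥H // ∀ i j, Commute (f i) (f j)} =>
          ∃ h : ↥H, ∀ i, (t' : Fin n → ↥H) i = h * (t : Fin n → ↥H) i * h⁻¹)) := by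
  have hG := card_commutingTuple_succ G n
  have hH := card_commutingTuple_succ H n
  have hindex := H.card_mul_index
  have hpos : 0 < Nat.card H := Nat.card_pos
  have hipos : 0 < H.index := Nat.pos_of_ne_zero H.index_ne_zero_of_finite
  have hsub := Nat.card_congr (commutingTupleSubgroupEquiv (ι := Fin (n + 1)) H)
  have hle : Nat.card {f : Fin (n + 1) → H // ∀ i j, Commute (f i) (f j)} ≤
      Nat.card {f : Fin (n + 1) → G // ∀ i j, Commute (f i) (f j)} := by
    rw [hsub]
    exact Nat.card_le_card_of_injective
      (Subtype.impEmbedding _ _ fun _ h => h.1) (Function.Embedding.injective _)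
  have hge := card_commutingTuple_le_index_pow_mul H (Finset.univ : Finset (Fin (n + 1)))
  rw [← hsub, Finset.card_univ, Fintype.card_fin] at hge
  rw [hG, hH, ← hindex] at hle hge
  constructor
  · refine Nat.le_of_mul_le_mul_right (hle.trans_eq ?_) hpos
    ring
  · refine Nat.le_of_mul_le_mul_right (hge.trans_eq ?_) (Nat.mul_pos hpos hipos)
    ring
end

section
/- Let G be a finite group, N a normal subgroup of G, and n ≥ 1 an integer. Then |Hom(ℤ^n, G)| ≤ |Hom(ℤ^n, G/N)| · |Hom(ℤ^n, N)|. -/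
/-- The commuting tuples of `G` that lift a prescribed tuple `s` of elements of `G ⧸ N`. -/
def commutingLifts {ι G : Type*} [Group G] (N : Subgroup G) (s : ι → G ⧸ N) : Set (ι → G) :=
  {t | (∀ i j, Commute (t i) (t j)) ∧ ∀ i, (t i : G ⧸ N) = s i}

/-- The possible `i`-th entries of a commuting lift with the other entries fixed form a coset of a
centralizer in `N`, or the empty set; so replacing the `i`-th coset by `N` cannot lose lifts. -/
theorem ncard_commutingLifts_le_update {ι G : Type*} [Finite ι] [DecidableEq ι] [Group G] [Finite G]
    (N : Subgroup G) [N.Normal] (s : ι → G ⧸ N) (i : ι) :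
    (commutingLifts N s).ncard ≤ (commutingLifts N (Function.update s i 1)).ncard := by
  classical
  let P : (ι → G) → G → Prop := fun r a => Function.update r i a ∈ commutingLifts N s
  let a : (ι → G) → G := fun r => if h : ∃ a, P r a then h.choose else 1
  have ha : ∀ t ∈ commutingLifts N s, P (Function.update t i 1) (a (Function.update t i 1)) := by
    intro t ht
    have h : ∃ a, P (Function.update t i 1) a := ⟨t i, by simpa [P] using ht⟩
    simpa only [a, dif_pos h] using h.choose_spec
  refine Set.ncard_le_ncard_of_injOn
    (fun t => Function.update t i ((a (Function.update t i 1))⁻¹ * t i)) ?_ ?_ (Set.toFinite _)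
  · intro t ht
    have h := ha t ht
    set b := a (Function.update t i 1)
    simp only [P, Function.update_idem] at h
    have hb : ∀ j, j ≠ i → Commute b (t j) := by
      intro j hj
      simpa [hj] using h.1 i j
    have hc : ∀ j, j ≠ i → Commute (b⁻¹ * t i) (t j) := fun j hj =>
      (hb j hj).inv_left.mul_left (ht.1 i j)
    refine ⟨fun j k => ?_, fun j => ?_⟩
    · by_cases hj : j = i <;> by_cases hk : k = i
      · subst hj; subst hk; exact Commute.refl _
      · subst hj; simpa [hk] using hc k hk
      · subst hk; simpa [hj] using (hc j hj).symm
      · simpa [hj, hk] using ht.1 j k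
    · by_cases hj : j = i
      · subst hj
        have h1 : (b : G ⧸ N) = s j := by simpa using h.2 j
        simp [h1, ht.2 j]
      · simpa [hj] using ht.2 j
  · intro t _ u _ htu
    have hr : Function.update t i 1 = Function.update u i 1 := by
      simpa using congrArg (fun r => Function.update r i 1) htu
    have hi : t i = u i := by simpa [hr] using congrFun htu i
    have h := congrArg (fun r => Function.update r i (u i)) hr
    simp only [Function.update_idem, Function.update_eq_self] at h
    rwa [← hi, Function.update_eq_self] at h

theorem ncard_commutingLifts_le_one {ι G : Type*} [Fintype ι] [Group G] [Finite G]
    (N : Subgroup G) [N.Normal] (s : ι → G ⧸ N) :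
    (commutingLifts N s).ncard ≤ (commutingLifts N (1 : ι → G ⧸ N)).ncard := by
  classical
  have h : ∀ S : Finset ι,
      (commutingLifts N s).ncard ≤ (commutingLifts N (S.piecewise 1 s)).ncard := by
    intro S
    induction S using Finset.induction_on with
    | empty => simp
    | insert i S _ ih =>
      rw [Finset.piecewise_insert]
      exact ih.trans (ncard_commutingLifts_le_update N _ i)
  simpa using h Finset.univ

theorem ncard_commutingLifts_one_le {ι G : Type*} [Finite ι] [Group G] [Finite G]
    (N : Subgroup G) [N.Normal] :
    (commutingLifts N (1 : ι → G ⧸ N)).ncard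
      ≤ Nat.card {t : ι → ↥N // ∀ i j, Commute (t i) (t j)} := by
  rw [← Nat.card_coe_set_eq]
  refine Nat.card_le_card_of_injective
    (fun t => ⟨fun i => ⟨t.1 i, (QuotientGroup.eq_one_iff _).1 (t.2.2 i)⟩,
      fun i j => Subtype.ext (t.2.1 i j)⟩) ?_
  intro t u htu
  ext i
  exact congrArg Subtype.val (congrFun (congrArg Subtype.val htu) i)

/-- Let `G` be a finite group, `N ⊴ G`, and `n ≥ 1`.  Then
`|Hom(ℤ^n, G)| ≤ |Hom(ℤ^n, G/N)|·|Hom(ℤ^n, N)|` (counting commuting `n`-tuples). -/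
theorem stmt_14 {G : Type*} [Group G] [Fintype G] (N : Subgroup G) [N.Normal]
    (n : ℕ) (hn : 1 ≤ n) :
    Nat.card {t : Fin n → G // ∀ i j, Commute (t i) (t j)}
      ≤ Nat.card {t : Fin n → G ⧸ N // ∀ i j, Commute (t i) (t j)}
        * Nat.card {t : Fin n → ↥N // ∀ i j, Commute (t i) (t j)} := by
  classical
  rw [Nat.card_eq_fintype_card, Nat.card_eq_fintype_card (α := {t : Fin n → G ⧸ N // _}),
    Fintype.card_subtype, Fintype.card_subtype, mul_comm]
  refine Finset.card_le_mul_card_image_of_maps_to (f := fun t i => (t i : G ⧸ N)) ?_ _ ?_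
  · intro t ht
    simp only [Finset.mem_filter, Finset.mem_univ, true_and] at ht ⊢
    exact fun i j => (ht i j).map (QuotientGroup.mk' N)
  · intro s _
    refine le_trans (le_of_eq ?_)
      ((ncard_commutingLifts_le_one N s).trans (ncard_commutingLifts_one_le N))
    rw [← Set.ncard_coe_finset]
    congr 1
    ext t
    simp [commutingLifts, funext_iff]
end

section
/- Let G be a finite group, N a normal subgroup of G, and n ≥ 1 an integer. Then k_n(G) ≤ k_n(G/N) · k_n(N), where k_n(G) is the number of conjugacy classes of commuting n-tuples in G. -/
/-- The commuting `m`-tuples in a group `G`. -/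
abbrev CommutingTuple (m : ℕ) (G : Type*) [Group G] : Type _ :=
  {f : Fin m → G // ∀ i j, Commute (f i) (f j)}

namespace CommutingTuple

/-- The coordinatewise conjugation action on commuting tuples. -/
instance conjAction (m : ℕ) (G : Type*) [Group G] : MulAction G (CommutingTuple m G) where
  smul g t := ⟨fun i => g * t.1 i * g⁻¹, fun i j => by
    simpa [MulAut.conj_apply] using (t.2 i j).map (MulAut.conj g)⟩
  one_smul t := Subtype.ext (funext fun i => by
    change 1 * t.1 i * 1⁻¹ = t.1 i
    simp)
  mul_smul g h t := Subtype.ext (funext fun i => by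
    change g * h * t.1 i * (g * h)⁻¹ = g * (h * t.1 i * h⁻¹) * g⁻¹
    group)

theorem smul_coe_apply {m : ℕ} {G : Type*} [Group G] (g : G) (t : CommutingTuple m G)
    (i : Fin m) : (g • t).1 i = g * t.1 i * g⁻¹ := rfl

theorem smul_eq_self_iff {m : ℕ} {G : Type*} [Group G] (g : G) (t : CommutingTuple m G) :
    g • t = t ↔ ∀ i, Commute g (t.1 i) := by
  simp only [Subtype.ext_iff, funext_iff, smul_coe_apply, mul_inv_eq_iff_eq_mul]
  rfl

/-- A commuting `(m + 1)`-tuple is an element together with a commuting `m`-tuple it fixes. -/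
def sigmaFixedByEquiv (m : ℕ) (G : Type*) [Group G] :
    (Σ g : G, MulAction.fixedBy (CommutingTuple m G) g) ≃ CommutingTuple (m + 1) G where
  toFun p := ⟨Fin.cons p.1 p.2.1.1, by
    have h := (smul_eq_self_iff p.1 p.2.1).1 p.2.2
    intro i j
    refine Fin.cases ?_ (fun i => ?_) i <;> refine Fin.cases ?_ (fun j => ?_) j
    · simp
    · simpa using h j
    · simpa using (h i).symm
    · simpa using p.2.1.2 i j⟩
  invFun t := ⟨t.1 0, ⟨⟨fun i => t.1 i.succ, fun i j => t.2 _ _⟩,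
    (smul_eq_self_iff _ _).2 fun i => t.2 _ _⟩⟩
  left_inv p := by
    obtain ⟨g, ⟨⟨f, hf⟩, h⟩⟩ := p
    rfl
  right_inv t := Subtype.ext (Fin.cons_self_tail t.1)

/-- Burnside's count: classes of commuting `m`-tuples against commuting `(m + 1)`-tuples. -/
theorem card_quot_mul_card (m : ℕ) (G : Type*) [Group G] :
    Nat.card (Quot (fun t t' : CommutingTuple m G => ∃ g : G, ∀ i, t'.1 i = g * t.1 i * g⁻¹))
      * Nat.card G = Nat.card (CommutingTuple (m + 1) G) := by
  have e : Quot (fun t t' : CommutingTuple m G => ∃ g : G, ∀ i, t'.1 i = g * t.1 i * g⁻¹) ≃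
      Quotient (MulAction.orbitRel G (CommutingTuple m G)) := by
    refine Quot.congrRight fun t t' => ?_
    refine Iff.trans ?_ (MulAction.orbitRel G (CommutingTuple m G)).comm'
    refine exists_congr fun g => ?_
    simp only [Subtype.ext_iff, funext_iff, smul_coe_apply, eq_comm]
  rw [Nat.card_congr e, ← Nat.card_prod, ← Nat.card_congr (sigmaFixedByEquiv m G)]
  exact (Nat.card_congr (MulAction.sigmaFixedByEquivOrbitsProdGroup G (CommutingTuple m G))).symm

variable {G : Type*} [Group G]

/-- The commuting tuples lying over a given tuple of cosets. -/
abbrev Over (N : Subgroup G) [N.Normal] {m : ℕ} (c : Fin m → G ⧸ N) : Type _ :=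
  {t : CommutingTuple m G // ∀ i, (t.1 i : G ⧸ N) = c i}

/-- Replacing one of the prescribed cosets by the trivial one does not decrease the number
of commuting tuples lying over them. -/
theorem card_over_le_update [Finite G] (N : Subgroup G) [N.Normal] {m : ℕ} (c : Fin m → G ⧸ N)
    (i : Fin m) : Nat.card (Over N c) ≤ Nat.card (Over N (Function.update c i 1)) := by
  rcases isEmpty_or_nonempty (Over N c) with h | h
  · simp
  let erase : Over N c → Fin m → G := fun t => Function.update t.1.1 i 1
  let base : Over N c → Over N c := fun t => Function.invFun erase (erase t)
  have hbase (t : Over N c) (j : Fin m) (hj : j ≠ i) : (base t).1.1 j = t.1.1 j := by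
    have := congrFun (Function.invFun_eq (f := erase) ⟨t, rfl⟩) j
    simpa [erase, base, hj] using this
  have hcomm (t : Over N c) (j : Fin m) (hj : j ≠ i) :
      Commute (((base t).1.1 i)⁻¹ * t.1.1 i) (t.1.1 j) := by
    refine Commute.mul_left (Commute.inv_left ?_) (t.1.2 i j)
    rw [← hbase t j hj]
    exact (base t).1.2 i j
  let shift : Over N c → Over N (Function.update c i 1) := fun t =>
    ⟨⟨Function.update t.1.1 i (((base t).1.1 i)⁻¹ * t.1.1 i), fun j k => by
      by_cases hj : j = i <;> by_cases hk : k = i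
      · subst hj hk
        exact Commute.refl _
      · subst hj
        simpa [hk] using hcomm t k hk
      · subst hk
        simpa [hj] using (hcomm t j hj).symm
      · simpa [hj, hk] using t.1.2 j k⟩, fun j => by
      by_cases hj : j = i
      · subst hj
        simp [(base t).2 j, t.2 j]
      · simp [hj, t.2 j]⟩
  refine Nat.card_le_card_of_injective shift fun t t' htt' => ?_
  have hval (j : Fin m) : Function.update t.1.1 i (((base t).1.1 i)⁻¹ * t.1.1 i) j =
      Function.update t'.1.1 i (((base t').1.1 i)⁻¹ * t'.1.1 i) j :=
    congrFun (congrArg (fun s => s.1.1) htt') j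
  have hoff (j : Fin m) (hj : j ≠ i) : t.1.1 j = t'.1.1 j := by simpa [hj] using hval j
  have herase : erase t = erase t' := by
    funext j
    by_cases hj : j = i
    · subst hj
      simp [erase]
    · simpa [erase, hj] using hoff j hj
  have hbb : base t = base t' := congrArg (Function.invFun erase) herase
  refine Subtype.ext (Subtype.ext (funext fun j => ?_))
  by_cases hj : j = i
  · subst hj
    simpa [hbb] using hval j
  · exact hoff j hj

theorem card_over_le_one [Finite G] (N : Subgroup G) [N.Normal] {m : ℕ} (c : Fin m → G ⧸ N) :
    Nat.card (Over N c) ≤ Nat.card (Over N (1 : Fin m → G ⧸ N)) := by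
  have key (s : Finset (Fin m)) :
      Nat.card (Over N c) ≤ Nat.card (Over N (s.piecewise 1 c)) := by
    induction s using Finset.induction_on with
    | empty => simp
    | insert i s _ ih =>
      rw [Finset.piecewise_insert]
      exact ih.trans (card_over_le_update N _ i)
  simpa using key Finset.univ

theorem card_over_one_le [Finite G] (N : Subgroup G) [N.Normal] (m : ℕ) :
    Nat.card (Over N (1 : Fin m → G ⧸ N)) ≤ Nat.card (CommutingTuple m N) := by
  let restrict : Over N (1 : Fin m → G ⧸ N) → CommutingTuple m N := fun t =>
    ⟨fun i => ⟨t.1.1 i, (QuotientGroup.eq_one_iff _).1 (t.2 i)⟩,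
      fun i j => Subtype.ext (t.1.2 i j)⟩
  refine Nat.card_le_card_of_injective restrict fun t t' h => ?_
  exact Subtype.ext (Subtype.ext (funext fun i =>
    congrArg Subtype.val (congrFun (congrArg Subtype.val h) i)))

/-- Commuting tuples are submultiplicative along group extensions. -/
theorem card_le_card_quotient_mul_card [Finite G] (N : Subgroup G) [N.Normal] (m : ℕ) :
    Nat.card (CommutingTuple m G) ≤
      Nat.card (CommutingTuple m (G ⧸ N)) * Nat.card (CommutingTuple m N) := by
  let toSigma : CommutingTuple m G → Σ c : CommutingTuple m (G ⧸ N), Over N c.1 := fun t =>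
    ⟨⟨fun i => (t.1 i : G ⧸ N), fun i j => (t.2 i j).map (QuotientGroup.mk' N)⟩,
      ⟨t, fun _ => rfl⟩⟩
  have hinj : Function.Injective toSigma :=
    Function.LeftInverse.injective (g := fun p => p.2.1) fun _ => rfl
  have := Fintype.ofFinite (CommutingTuple m (G ⧸ N))
  calc Nat.card (CommutingTuple m G)
      ≤ Nat.card (Σ c : CommutingTuple m (G ⧸ N), Over N c.1) :=
        Nat.card_le_card_of_injective toSigma hinj
    _ = ∑ c : CommutingTuple m (G ⧸ N), Nat.card (Over N c.1) := Nat.card_sigma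
    _ ≤ ∑ _c : CommutingTuple m (G ⧸ N), Nat.card (CommutingTuple m N) :=
        Finset.sum_le_sum fun c _ => (card_over_le_one N c.1).trans (card_over_one_le N m)
    _ = _ := by simp

end CommutingTuple

/-- Let `G` be a finite group, `N ⊴ G`, and `n ≥ 1`.  Then
`k_n(G) ≤ k_n(G/N)·k_n(N)`, where `k_n(G)` denotes the number of conjugacy classes of
commuting `n`-tuples in `G`. -/
theorem stmt_15 {G : Type*} [Group G] [Fintype G] (N : Subgroup G) [N.Normal]
    (n : ℕ) (hn : 1 ≤ n) :
    Nat.card (Quot (fun t t' : {f : Fin n → G // ∀ i j, Commute (f i) (f j)} =>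
        ∃ g : G, ∀ i, (t' : Fin n → G) i = g * (t : Fin n → G) i * g⁻¹))
      ≤ Nat.card (Quot (fun t t' : {f : Fin n → G ⧸ N // ∀ i j, Commute (f i) (f j)} =>
          ∃ g : G ⧸ N, ∀ i, (t' : Fin n → G ⧸ N) i = g * (t : Fin n → G ⧸ N) i * g⁻¹))
        * Nat.card (Quot (fun t t' : {f : Fin n → ↥N // ∀ i j, Commute (f i) (f j)} =>
          ∃ g : ↥N, ∀ i, (t' : Fin n → ↥N) i = g * (t : Fin n → ↥N) i * g⁻¹)) := by
  have h := CommutingTuple.card_le_card_quotient_mul_card N (n + 1)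
  rw [← CommutingTuple.card_quot_mul_card, ← CommutingTuple.card_quot_mul_card,
    ← CommutingTuple.card_quot_mul_card, mul_mul_mul_comm,
    ← Subgroup.card_eq_card_quotient_mul_card_subgroup] at h
  exact Nat.le_of_mul_le_mul_right h Nat.card_pos
end

section
/- Let G be a finite nonabelian group, let c = max{ |C_G(x)| : x ∈ G \ Z(G) } be the largest order of the centralizer of a noncentral element, and let p be the smallest prime divisor of the index |G : Z(G)|. Then for every integer n ≥ 1, p^n · |Hom(ℤ^{n+1}, G)| ≤ (p^n + p^{n−1} + ⋯ + p + 1) · c^n · |G| (equivalently, P_2(G, n+1) ≤ (p^n + ⋯ + p + 1)·c^n / (p^n·|G|^n), where P_2(G,s) = |Hom(ℤ^s,G)|/|G|^s). -/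
/-- Splitting commuting tuples according to whether the first entry is central. -/
lemma card_commuting_tuples_succ_le {G : Type*} [Group G] [Finite G] (c : ℕ)
    (hc : ∀ x : G, x ∉ Subgroup.center G →
      Nat.card (Subgroup.centralizer ({x} : Set G)) ≤ c) (k : ℕ) :
    Nat.card {t : Fin (k + 1) → G // ∀ i j, Commute (t i) (t j)} ≤
      Nat.card (Subgroup.center G) *
        Nat.card {t : Fin k → G // ∀ i j, Commute (t i) (t j)} + Nat.card G * c ^ k := by
  classical
  have := Fintype.ofFinite G
  let f : {t : Fin (k + 1) → G // ∀ i j, Commute (t i) (t j)} →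
      (Subgroup.center G × {t : Fin k → G // ∀ i j, Commute (t i) (t j)}) ⊕
        (Σ x : {x : G // x ∉ Subgroup.center G},
          (Fin k → Subgroup.centralizer ({x.1} : Set G))) := fun t =>
    if h : t.1 0 ∈ Subgroup.center G then
      Sum.inl (⟨t.1 0, h⟩, ⟨fun i => t.1 i.succ, fun i j => t.2 _ _⟩)
    else
      Sum.inr ⟨⟨t.1 0, h⟩, fun i => ⟨t.1 i.succ,
        Subgroup.mem_centralizer_singleton_iff.2 (t.2 i.succ 0)⟩⟩
  let r : ((Subgroup.center G × {t : Fin k → G // ∀ i j, Commute (t i) (t j)}) ⊕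
        (Σ x : {x : G // x ∉ Subgroup.center G},
          (Fin k → Subgroup.centralizer ({x.1} : Set G)))) → Fin (k + 1) → G :=
    Sum.elim (fun y => Fin.cons y.1.1 y.2.1) (fun y => Fin.cons y.1.1 fun i => (y.2 i).1)
  have hr : ∀ t, r (f t) = t.1 := by
    intro t
    by_cases h : t.1 0 ∈ Subgroup.center G
    · simp only [f, dif_pos h]
      exact Fin.cons_self_tail t.1
    · simp only [f, dif_neg h]
      exact Fin.cons_self_tail t.1
  have hf : Function.Injective f := fun s t hst =>
    Subtype.ext (by rw [← hr s, ← hr t, hst])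
  refine (Nat.card_le_card_of_injective f hf).trans ?_
  rw [Nat.card_sum, Nat.card_prod, Nat.card_sigma]
  gcongr
  calc _ ≤ ∑ _x : {x : G // x ∉ Subgroup.center G}, c ^ k := by
        refine Finset.sum_le_sum fun x _ => ?_
        rw [Nat.card_fun, Nat.card_fin]
        exact Nat.pow_le_pow_left (hc x.1 x.2) k
    _ = Nat.card {x : G // x ∉ Subgroup.center G} * c ^ k := by simp
    _ ≤ _ := by
        gcongr
        exact Nat.card_le_card_of_injective _ Subtype.val_injective

/-- The center has index at least `p` in the centralizer of a noncentral element. -/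
lemma mul_card_center_le_card_centralizer {G : Type*} [Group G] [Finite G] {p : ℕ}
    (hp : ∀ q : ℕ, q.Prime → q ∣ (Subgroup.center G).index → p ≤ q)
    {x : G} (hx : x ∉ Subgroup.center G) :
    p * Nat.card (Subgroup.center G) ≤ Nat.card (Subgroup.centralizer ({x} : Set G)) := by
  have hle : Subgroup.center G ≤ Subgroup.centralizer ({x} : Set G) :=
    Subgroup.center_le_centralizer _
  have hne : (Subgroup.center G).relIndex (Subgroup.centralizer ({x} : Set G)) ≠ 1 := fun h =>
    hx (Subgroup.relIndex_eq_one.1 h (Subgroup.mem_centralizer_singleton_iff.2 rfl))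
  have hq := Nat.minFac_prime hne
  have hpm := hp _ hq ((Nat.minFac_dvd _).trans (Subgroup.relIndex_dvd_index_of_le hle))
  have hpos : 0 < (Subgroup.center G).relIndex (Subgroup.centralizer ({x} : Set G)) :=
    Nat.pos_of_ne_zero (Subgroup.index_ne_zero_of_finite)
  rw [← Subgroup.relIndex_bot_left (Subgroup.centralizer ({x} : Set G)),
    ← Subgroup.relIndex_mul_relIndex _ _ _ bot_le hle, Subgroup.relIndex_bot_left, mul_comm]
  gcongr
  exact hpm.trans (Nat.minFac_le hpos)


/-- Let `G` be a finite nonabelian group, `c` the largest order of the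
centralizer of a noncentral element, and `p` the smallest prime divisor of `|G : Z(G)|`.
Then for every `n ≥ 1`,
`p^n·|Hom(ℤ^{n+1}, G)| ≤ (p^n + ⋯ + p + 1)·c^n·|G|`; equivalently
`P_2(G,n+1) ≤ (p^n + ⋯ + p + 1)·c^n/(p^n·|G|^n)`. -/
theorem stmt_16 {G : Type*} [Group G] [Fintype G]
    (hna : ∃ a b : G, a * b ≠ b * a)
    (c : ℕ)
    (hc : IsGreatest {m : ℕ | ∃ x : G, x ∉ Subgroup.center G ∧
      m = Nat.card (↥(Subgroup.centralizer ({x} : Set G)))} c)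
    (p : ℕ)
    (hp : IsLeast {q : ℕ | q.Prime ∧ q ∣ (Subgroup.center G).index} p)
    (n : ℕ) (hn : 1 ≤ n) :
    p ^ n * Nat.card {t : Fin (n + 1) → G // ∀ i j, Commute (t i) (t j)}
      ≤ (∑ i ∈ Finset.range (n + 1), p ^ i) * c ^ n * Nat.card G := by
  clear hna hn
  obtain ⟨⟨x, hx, hxc⟩, hmax⟩ := hc
  have hpz : p * Nat.card (Subgroup.center G) ≤ c :=
    hxc ▸ mul_card_center_le_card_centralizer (fun q hq hd => hp.2 ⟨hq, hd⟩) hx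
  have hrec := card_commuting_tuples_succ_le c fun y hy => hmax ⟨y, hy, rfl⟩
  induction n with
  | zero => simp
  | succ n ih =>
    calc _ ≤ p ^ (n + 1) * _ := Nat.mul_le_mul_left _ (hrec (n + 1))
      _ = p * Nat.card (Subgroup.center G) *
            (p ^ n * Nat.card {t : Fin (n + 1) → G // ∀ i j, Commute (t i) (t j)}) +
          p ^ (n + 1) * (Nat.card G * c ^ (n + 1)) := by ring
      _ ≤ c * ((∑ i ∈ Finset.range (n + 1), p ^ i) * c ^ n * Nat.card G) +
          p ^ (n + 1) * (Nat.card G * c ^ (n + 1)) := by gcongr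
      _ = _ := by rw [Finset.sum_range_succ _ (n + 1)]; ring
end

section
/- Let G be a finite nonabelian group. Then for every integer n ≥ 0, 2^{2n+1} · |Hom(ℤ^{n+1}, G)| ≤ (3·2^n − 1) · |G|^{n+1} (equivalently, P_2(G, n+1) ≤ (3·2^n − 1)/2^{2n+1}, where P_2(G,s) = |Hom(ℤ^s,G)|/|G|^s). -/
/-- The centre of a finite nonabelian group has index at least `4`. -/
theorem four_mul_card_center_le {G : Type*} [Group G] [Finite G]
    (hna : ∃ a b : G, a * b ≠ b * a) :
    4 * Nat.card (Subgroup.center G) ≤ Nat.card G := by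
  have hnc : ¬ IsCyclic (G ⧸ Subgroup.center G) := by
    intro _
    obtain ⟨a, b, hab⟩ := hna
    exact hab ((isMulCommutative_of_isCyclic_quotient_center_self (G := G)).is_comm.comm a b)
  have hidx : 4 ≤ (Subgroup.center G).index := by
    by_contra! hlt
    have hpos : (Subgroup.center G).index ≠ 0 := Subgroup.index_ne_zero_of_finite
    rw [Subgroup.index] at hlt hpos
    have hcases : Nat.card (G ⧸ Subgroup.center G) = 1 ∨ Nat.card (G ⧸ Subgroup.center G) = 2 ∨
        Nat.card (G ⧸ Subgroup.center G) = 3 := by omega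
    rcases hcases with h | h | h
    · have := (Nat.card_eq_one_iff_unique.mp h).1
      exact hnc isCyclic_of_subsingleton
    · exact hnc (isCyclic_of_prime_card (p := 2) h)
    · exact hnc (isCyclic_of_prime_card (p := 3) h)
  rw [← (Subgroup.center G).card_mul_index, mul_comm]
  exact Nat.mul_le_mul_left _ hidx

/-- The centralizer of a noncentral element of a finite group has index at least `2`. -/
theorem two_mul_card_centralizer_le {G : Type*} [Group G] [Finite G] {g : G}
    (hg : g ∉ Subgroup.center G) :
    2 * Nat.card (Subgroup.centralizer {g}) ≤ Nat.card G := by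
  have hpos : (Subgroup.centralizer {g}).index ≠ 0 := Subgroup.index_ne_zero_of_finite
  have hone : (Subgroup.centralizer {g}).index ≠ 1 := by
    intro h
    rw [Subgroup.index_eq_one, Subgroup.centralizer_eq_top_iff_subset] at h
    exact hg (h rfl)
  rw [← (Subgroup.centralizer {g}).card_mul_index, mul_comm]
  exact Nat.mul_le_mul_left _ (by omega)

/-- The first entry of a commuting tuple, together with the remaining ones. -/
def commutingTupleEquivSigma (G : Type*) [Group G] (n : ℕ) :
    {t : Fin (n + 1) → G // ∀ i j, Commute (t i) (t j)} ≃
      Σ g : G, {t : Fin n → G // (∀ i, Commute g (t i)) ∧ ∀ i j, Commute (t i) (t j)} where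
  toFun t := ⟨t.1 0, Fin.tail t.1, fun i => t.2 0 i.succ, fun i j => t.2 i.succ j.succ⟩
  invFun s := ⟨Fin.cons s.1 s.2.1, by
    intro i j
    cases i using Fin.cases <;> cases j using Fin.cases
    · simp
    · simpa using s.2.2.1 _
    · simpa using (s.2.2.1 _).symm
    · simpa using s.2.2.2 _ _⟩
  left_inv t := Subtype.ext (Fin.cons_self_tail t.1)
  right_inv _ := rfl

/-- The number of commuting tuples with prescribed first entry `g` is at most that of all tuples
in the centralizer of `g`. -/
theorem card_commuting_tuple_cons_le {G : Type*} [Group G] [Finite G] (g : G) (n : ℕ) :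
    Nat.card {t : Fin n → G // (∀ i, Commute g (t i)) ∧ ∀ i j, Commute (t i) (t j)} ≤
      Nat.card (Subgroup.centralizer {g}) ^ n := by
  have hcard : Nat.card (Fin n → Subgroup.centralizer {g}) =
      Nat.card (Subgroup.centralizer {g}) ^ n := by
    rw [Nat.card_fun, Nat.card_fin]
  rw [← hcard]
  refine Nat.card_le_card_of_injective
    (fun t i => ⟨t.1 i, Subgroup.mem_centralizer_singleton_iff.mpr (t.2.1 i).symm.eq⟩) ?_
  intro s t hst
  ext i
  exact congrArg Subtype.val (congrFun hst i)

/-- A recursive bound for the number of commuting tuples: central first entries are followed by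
an arbitrary commuting tuple, and noncentral ones by a tuple in a proper subgroup. -/
theorem card_commuting_tuple_succ_le {G : Type*} [Group G] [Finite G] (n : ℕ) :
    2 ^ n * Nat.card {t : Fin (n + 1) → G // ∀ i j, Commute (t i) (t j)} ≤
      Nat.card (Subgroup.center G) *
          (2 ^ n * Nat.card {t : Fin n → G // ∀ i j, Commute (t i) (t j)}) +
        (Nat.card G - Nat.card (Subgroup.center G)) * Nat.card G ^ n := by
  classical
  have := Fintype.ofFinite G
  rw [Nat.card_congr (commutingTupleEquivSigma G n), Nat.card_sigma, Finset.mul_sum]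
  have hz : (Finset.univ.filter (· ∈ Subgroup.center G)).card = Nat.card (Subgroup.center G) := by
    rw [Nat.card_eq_fintype_card, Fintype.card_subtype]
  have hk : (Finset.univ.filter (· ∉ Subgroup.center G)).card =
      Nat.card G - Nat.card (Subgroup.center G) := by
    rw [← hz, Nat.card_eq_fintype_card, ← Finset.card_univ,
      ← Finset.card_filter_add_card_filter_not (s := Finset.univ) (· ∈ Subgroup.center G)]
    omega
  rw [← hk, ← hz, ← smul_eq_mul (a := Finset.card _), ← smul_eq_mul (a := Finset.card _),
    ← Finset.sum_filter_add_sum_filter_not Finset.univ (· ∈ Subgroup.center G)]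
  refine add_le_add (Finset.sum_le_card_nsmul _ _ _ fun g _ => ?_)
    (Finset.sum_le_card_nsmul _ _ _ fun g hg => ?_)
  · refine Nat.mul_le_mul_left _ (Nat.card_le_card_of_injective
      (fun t => ⟨t.1, t.2.2⟩) fun s t hst => Subtype.ext (Subtype.mk.inj hst))
  · calc _ ≤ 2 ^ n * Nat.card (Subgroup.centralizer {g}) ^ n :=
          Nat.mul_le_mul_left _ (card_commuting_tuple_cons_le g n)
      _ = (2 * Nat.card (Subgroup.centralizer {g})) ^ n := (mul_pow _ _ _).symm
      _ ≤ Nat.card G ^ n :=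
          Nat.pow_le_pow_left (two_mul_card_centralizer_le (Finset.mem_filter.mp hg).2) n

/-- Let `G` be a finite nonabelian group.  Then for every `n ≥ 0`,
`2^{2n+1}·|Hom(ℤ^{n+1}, G)| ≤ (3·2^n − 1)·|G|^{n+1}`; equivalently
`P_2(G,n+1) ≤ (3·2^n − 1)/2^{2n+1}`. -/
theorem stmt_18 {G : Type*} [Group G] [Fintype G]
    (hna : ∃ a b : G, a * b ≠ b * a) (n : ℕ) :
    2 ^ (2 * n + 1) * Nat.card {t : Fin (n + 1) → G // ∀ i j, Commute (t i) (t j)}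
      ≤ (3 * 2 ^ n - 1) * (Nat.card G) ^ (n + 1) := by
  induction n with
  | zero =>
    simp
  | succ n ih =>
    have hrec := card_commuting_tuple_succ_le (G := G) (n + 1)
    have hz := four_mul_card_center_le hna
    set c := Nat.card {t : Fin (n + 1) → G // ∀ i j, Commute (t i) (t j)}
    set c' := Nat.card {t : Fin (n + 1 + 1) → G // ∀ i j, Commute (t i) (t j)}
    set z := Nat.card (Subgroup.center G)
    set N := Nat.card G
    have ha : 1 ≤ 2 ^ n := Nat.one_le_two_pow
    have e₁ : 2 ^ (2 * n + 1) = 2 * (2 ^ n) ^ 2 := by ring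
    have e₂ : 2 ^ (2 * (n + 1) + 1) = 8 * (2 ^ n) ^ 2 := by ring
    have e₃ : 2 ^ (n + 1) = 2 * 2 ^ n := by ring
    rw [e₁] at ih
    rw [e₃] at hrec
    rw [e₂, e₃, pow_succ N (n + 1)]
    generalize 2 ^ n = a at *
    generalize N ^ (n + 1) = M at *
    zify [show z ≤ N by omega, show 1 ≤ 3 * a by omega,
      show 1 ≤ 3 * (2 * a) by omega] at *
    calc 8 * (a : ℤ) ^ 2 * c' = 4 * a * (2 * a * c') := by ring
      _ ≤ 4 * a * (z * (2 * a * c) + (N - z) * M) := by gcongr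
      _ = 4 * z * (2 * a ^ 2 * c) + 4 * a * (N - z) * M := by ring
      _ ≤ 4 * z * ((3 * a - 1) * M) + 4 * a * (N - z) * M := by gcongr
      _ = (4 * z) * ((2 * a - 1) * M) + 4 * a * N * M := by ring
      _ ≤ N * ((2 * a - 1) * M) + 4 * a * N * M := by
        have : 0 ≤ (2 * (a : ℤ) - 1) * M := mul_nonneg (by linarith) (by positivity)
        gcongr
      _ = (3 * (2 * a) - 1) * (M * N) := by ring
end
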